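/- arXiv:1505.08033 — 2 statements merged into one kernel-verified Lean document; each statement's English description precedes it below -/
import Mathlib

section
/- Let d ≥ 1 and let σ be a nonzero, T^{×d}-invariant, boundedly finite measure on X^d such that the system (X^d, σ, T^{×d}) is ergodic. Then there exists a partition of {1,…,d} into subsets I₁,…,I_r such that σ = σ^{I₁} ⊗ ⋯ ⊗ σ^{I_r}, where each σ^{I_j} is a diagonal measure on X^{I_j}. If moreover the system (X^d, σ, T^{×d}) is totally dissipative, then σ is a diagonal measure supported on a single T^{×d}-orbit. -/
open MeasureTheory Set
open scoped ENNReal NNReal Classical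

noncomputable section

/-- Heights of the towers of the infinite Chacon transformation
(tower `0` is `[0,1)` with a single level, so `chaconH 1 = 8`). -/
def chaconH : ℕ → ℕ
  | 0 => 1
  | n + 1 => 2 * (3 * chaconH n + 1)

/-- Left endpoint of level `k` of tower `n`.  At step `n+1`, tower `n` (which fills
`[0, hₙ·3⁻ⁿ)`) is cut into three subcolumns of equal width; one spacer is added above the
middle subcolumn and `3hₙ+1` spacers above the third one, the spacers being taken
successively as the leftmost intervals of length `3⁻⁽ⁿ⁺¹⁾` in the unused part of `ℝ₊`;
then the three subcolumns are stacked left under right. -/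
def chaconL : ℕ → ℕ → ℝ
  | 0, _ => 0
  | n + 1, k =>
      if k < chaconH n then chaconL n k
      else if k < 2 * chaconH n then chaconL n (k - chaconH n) + (3 : ℝ)⁻¹ ^ (n + 1)
      else if k = 2 * chaconH n then (chaconH n : ℝ) * (3 : ℝ)⁻¹ ^ n
      else if k ≤ 3 * chaconH n then
        chaconL n (k - 2 * chaconH n - 1) + 2 * (3 : ℝ)⁻¹ ^ (n + 1)
      else (chaconH n : ℝ) * (3 : ℝ)⁻¹ ^ n
        + ((k : ℝ) - 3 * (chaconH n : ℝ)) * (3 : ℝ)⁻¹ ^ (n + 1)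

/-- Level `k` of tower `n`: an interval of length `3⁻ⁿ`, closed to the left and open to
the right. -/
def chaconLevel (n k : ℕ) : Set ℝ := Ico (chaconL n k) (chaconL n k + (3 : ℝ)⁻¹ ^ n)

/-- The Chacon transformation on `ℝ`: each point of a non-top level of some tower is sent
to the point directly above it (the value does not depend on the choice of the tower). -/
def chaconT0 (x : ℝ) : ℝ :=
  if h : ∃ p : ℕ × ℕ, p.2 + 1 < chaconH p.1 ∧ x ∈ chaconLevel p.1 p.2 then
    x - chaconL h.choose.1 h.choose.2 + chaconL h.choose.1 (h.choose.2 + 1)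
  else x

/-- The inverse of the Chacon transformation on `ℝ`. -/
def chaconT0inv (x : ℝ) : ℝ :=
  if h : ∃ p : ℕ × ℕ, p.2 + 1 < chaconH p.1 ∧ x ∈ chaconLevel p.1 (p.2 + 1) then
    x - chaconL h.choose.1 (h.choose.2 + 1) + chaconL h.choose.1 h.choose.2
  else x

/-- The space `X = ℝ₊`. -/
abbrev ChaconX : Type := ↥(Set.Ici (0 : ℝ))

/-- The infinite Chacon transformation `T` on `X = ℝ₊`. -/
def chaconT (x : ChaconX) : ChaconX :=
  ⟨max 0 (chaconT0 (x : ℝ)), Set.mem_Ici.mpr (le_max_left 0 _)⟩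

/-- The inverse `T⁻¹` of the Chacon transformation on `X = ℝ₊`. -/
def chaconTinv (x : ChaconX) : ChaconX :=
  ⟨max 0 (chaconT0inv (x : ℝ)), Set.mem_Ici.mpr (le_max_left 0 _)⟩

/-- Integer powers `T^j` of the Chacon transformation. -/
def chaconTZ (j : ℤ) : ChaconX → ChaconX :=
  if 0 ≤ j then chaconT^[j.toNat] else chaconTinv^[(-j).toNat]

/-- Lebesgue measure `μ` on `X = ℝ₊`. -/
def chaconMu : Measure ChaconX := volume.comap Subtype.val

/-- `C n`: the bottom half of tower `n` (its lowest `hₙ/2` levels), as a subset of `X`. -/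
def chaconC (n : ℕ) : Set ChaconX :=
  {x | ∃ k, k < chaconH n / 2 ∧ (x : ℝ) ∈ chaconLevel n k}

/-- `tₙ x ∈ {1,2,3}`: the subcolumn of tower `n` containing `x`
(junk value `0` if `x` is not in tower `n`). -/
def chaconTn (n : ℕ) (x : ChaconX) : ℕ :=
  if h : ∃ k, k < chaconH n ∧ (x : ℝ) ∈ chaconLevel n k then
    1 + (⌊((x : ℝ) - chaconL n h.choose) * (3 : ℝ) ^ (n + 1)⌋).toNat
  else 0

/-- The Cartesian power `T^{×ι}` of the Chacon transformation, acting coordinatewise. -/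
def chaconTd (ι : Type) (x : ι → ChaconX) : ι → ChaconX := fun i => chaconT (x i)

/-- Integer powers `(T^{×ι})^j`, acting coordinatewise. -/
def chaconTdZ (ι : Type) (j : ℤ) (x : ι → ChaconX) : ι → ChaconX := fun i => chaconTZ j (x i)

/-- `Cₙ^ι ⊆ X^ι`. -/
def chaconCd (ι : Type) (n : ℕ) : Set (ι → ChaconX) := {x | ∀ i, x i ∈ chaconC n}

/-- An `n`-box: a Cartesian product of levels of `C n`. -/
def IsNBox (ι : Type) (n : ℕ) (B : Set (ι → ChaconX)) : Prop :=
  ∃ k : ι → ℕ, (∀ i, k i < chaconH n / 2) ∧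
    B = {x : ι → ChaconX | ∀ i, ((x i : ℝ)) ∈ chaconLevel n (k i)}

/-- An `n`-diagonal: a maximal finite family of `n`-boxes `B, T^{×d}B, …, (T^{×d})^ℓ B`,
regarded as the union of its boxes. -/
def IsNDiagonal (ι : Type) (n : ℕ) (D : Set (ι → ChaconX)) : Prop :=
  ∃ (B : Set (ι → ChaconX)) (ℓ : ℕ),
    (∀ j : ℕ, j ≤ ℓ → IsNBox ι n (chaconTdZ ι (j : ℤ) '' B)) ∧
    ¬ chaconTdZ ι (-1) '' B ⊆ chaconCd ι n ∧
    ¬ chaconTdZ ι ((ℓ : ℤ) + 1) '' B ⊆ chaconCd ι n ∧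
    D = ⋃ j ∈ Finset.range (ℓ + 1), chaconTdZ ι (j : ℤ) '' B

/-- A measure is boundedly finite if bounded (measurable) sets have finite measure. -/
def BoundedlyFinite {α : Type*} [MeasurableSpace α] [PseudoMetricSpace α]
    (σ : Measure α) : Prop :=
  ∀ A : Set α, MeasurableSet A → Bornology.IsBounded A → σ A < ⊤

/-- Diagonal measures on `X^ι`: boundedly finite, `T^{×ι}`-invariant measures which are,
for every large enough `n`, concentrated on a single `n`-diagonal inside `Cₙ^ι`. -/
def IsDiagonalMeasure (ι : Type) [Fintype ι] (σ : Measure (ι → ChaconX)) : Prop :=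
  BoundedlyFinite σ ∧ σ.map (chaconTd ι) = σ ∧
    ∃ n₀ : ℕ, 1 ≤ n₀ ∧ ∀ n, n₀ ≤ n →
      ∃ D : Set (ι → ChaconX), IsNDiagonal ι n D ∧ σ (chaconCd ι n \ D) = 0

/-- A wandering set for the `ℤ`-action `Uz`. -/
def ZWandering {α : Type*} (Uz : ℤ → α → α) (W : Set α) : Prop :=
  ∀ j k : ℤ, j ≠ k → Disjoint (Uz j '' W) (Uz k '' W)

/-- Conservativity: every measurable wandering set is null. -/
def ZConservative {α : Type*} [MeasurableSpace α] (σ : Measure α) (Uz : ℤ → α → α) : Prop :=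
  ∀ W : Set α, MeasurableSet W → ZWandering Uz W → σ W = 0

/-- Total dissipativity: mod `σ`, the space is the disjoint union of the iterates of a
wandering set. -/
def ZTotallyDissipative {α : Type*} [MeasurableSpace α] (σ : Measure α)
    (Uz : ℤ → α → α) : Prop :=
  ∃ W : Set α, MeasurableSet W ∧ ZWandering Uz W ∧ σ ((⋃ j : ℤ, Uz j '' W)ᶜ) = 0

/-- Ergodicity of a (not necessarily finite) invariant measure: every invariant
measurable set is null or conull. -/
def MeasErgodic {α : Type*} [MeasurableSpace α] (σ : Measure α) (U : α → α) : Prop :=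
  ∀ A : Set α, MeasurableSet A → U ⁻¹' A = A → σ A = 0 ∨ σ Aᶜ = 0

/-- `Icc a b` is an `n`-crossing for `x`: a maximal finite set of consecutive integers `j`
with `(T^{×ι})^j x ∈ Cₙ^ι`. -/
def IsCrossing (ι : Type) (n : ℕ) (x : ι → ChaconX) (a b : ℤ) : Prop :=
  a ≤ b ∧ (∀ j : ℤ, a ≤ j → j ≤ b → chaconTdZ ι j x ∈ chaconCd ι n) ∧
    chaconTdZ ι (a - 1) x ∉ chaconCd ι n ∧ chaconTdZ ι (b + 1) x ∉ chaconCd ι n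

/-- `n(x)`: the smallest `n ≥ 1` with `x ∈ Cₙ^ι`. -/
def chaconNOf (ι : Type) (x : ι → ChaconX) : ℕ :=
  if h : ∃ n : ℕ, 1 ≤ n ∧ x ∈ chaconCd ι n then Nat.find h else 0

/-- `B(τ)`: the points of `B` whose coordinate `i` lies in subcolumn `τ i` of tower `n`. -/
def chaconBoxTau (ι : Type) (n : ℕ) (B : Set (ι → ChaconX)) (τ : ι → ℕ) :
    Set (ι → ChaconX) :=
  {x ∈ B | ∀ i, chaconTn n (x i) = τ i}

/-- The transition from the `n`-diagonal `D` to the `(n+1)`-diagonal `D'` is the central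
one, i.e. `D' = D(1,…,1)`. -/
def CentralTransition (ι : Type) (n : ℕ) (D D' : Set (ι → ChaconX)) : Prop :=
  ∀ B : Set (ι → ChaconX), IsNBox ι n B → B ⊆ D →
    chaconBoxTau ι n B (fun _ => 1) ⊆ D'

/-- The `n`-diagonal containing a given set (junk value `∅` if there is none). -/
def diagOfBox (ι : Type) (n : ℕ) (B : Set (ι → ChaconX)) : Set (ι → ChaconX) :=
  if h : ∃ D, IsNDiagonal ι n D ∧ B ⊆ D then h.choose else ∅

/-- `D(τ)`: the `(n+1)`-diagonal containing `B(τ)` for an `n`-box `B ⊆ D`. -/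
def diagTau (ι : Type) (n : ℕ) (D : Set (ι → ChaconX)) (τ : ι → ℕ) : Set (ι → ChaconX) :=
  if h : ∃ B, IsNBox ι n B ∧ B ⊆ D then diagOfBox ι (n + 1) (chaconBoxTau ι n h.choose τ)
  else ∅

/-- A consistent family of diagonals `(Dₙ)_{n ≥ n₀}`. -/
def IsConsistentFamily (ι : Type) (n₀ : ℕ) (D : ℕ → Set (ι → ChaconX)) : Prop :=
  (∀ n, n₀ ≤ n → IsNDiagonal ι n (D n)) ∧
    (chaconCd ι (n₀ - 1) ∩ ⋂ n, ⋂ (_ : n₀ ≤ n), D n).Nonempty ∧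
    ∀ n, n₀ ≤ n → D (n + 1) ∩ chaconCd ι n ⊆ D n

/-- `x` is seen by the family of diagonals `(Dₙ)_{n ≥ n₀}`. -/
def SeenByFam (ι : Type) (n₀ : ℕ) (D : ℕ → Set (ι → ChaconX)) (x : ι → ChaconX) : Prop :=
  ∀ n, n₀ ≤ n → x ∉ chaconCd ι n ∨ x ∈ D n

/-- Graph joinings arising from powers of `T`:
`σ(A₁ × ⋯ × A_d) = α μ(T^{-k₁}A₁ ∩ ⋯ ∩ T^{-k_d}A_d)` for some `0 < α < ∞`. -/
def IsGraphJoining (ι : Type) [Fintype ι] (σ : Measure (ι → ChaconX)) : Prop :=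
  ∃ (α : ℝ≥0∞) (k : ι → ℤ), 0 < α ∧ α ≠ ⊤ ∧
    ∀ A : ι → Set ChaconX, (∀ i, MeasurableSet (A i)) →
      σ (Set.univ.pi A) = α * chaconMu (⋂ i, chaconTZ (k i) ⁻¹' A i)

/-- Ergodic components of `σ`: the nonzero boundedly finite `T^{×ι}`-invariant ergodic
measures, absolutely continuous with respect to `σ`, which appear in its ergodic
decomposition. -/
def IsErgodicComponent (ι : Type) [Fintype ι] (σ ρ : Measure (ι → ChaconX)) : Prop :=
  ρ ≠ 0 ∧ BoundedlyFinite ρ ∧ ρ.map (chaconTd ι) = ρ ∧ MeasErgodic ρ (chaconTd ι) ∧ ρ ≪ σ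

end


noncomputable section

namespace Chacon

/-! ### Combinatorics of the towers -/

local notation "h" => chaconH

lemma h_succ (n : ℕ) : h (n + 1) = 2 * (3 * h n + 1) := rfl

lemma h_pos (n : ℕ) : 1 ≤ h n := by
  induction n with
  | zero => exact le_refl _
  | succ n ih => rw [h_succ]; omega

lemma h_half_succ (n : ℕ) : h (n + 1) / 2 = 3 * h n + 1 := by
  rw [h_succ]; omega

lemma h_half (n : ℕ) (hn : 1 ≤ n) : 4 ≤ h n / 2 ∧ 2 * (h n / 2) = h n := by
  obtain ⟨m, rfl⟩ : ∃ m, n = m + 1 := ⟨n - 1, by omega⟩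
  have := h_pos m
  rw [h_half_succ, h_succ]; omega

/-- Integer code of the left endpoint of level `k` of tower `n`. -/
def p : ℕ → ℕ → ℕ
  | 0, _ => 0
  | n + 1, k =>
      if k < h n then 3 * p n k
      else if k < 2 * h n then 3 * p n (k - h n) + 1
      else if k = 2 * h n then 3 * h n
      else if k ≤ 3 * h n then 3 * p n (k - 2 * h n - 1) + 2
      else k

lemma L_eq (n k : ℕ) : chaconL n k = (p n k : ℝ) * (3 : ℝ)⁻¹ ^ n := by
  induction n generalizing k with
  | zero => simp [chaconL, p]
  | succ n ih =>
    simp only [chaconL, p]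
    split_ifs <;> (try rw [ih]) <;> push_cast <;> rw [pow_succ] <;> ring

/-- Column shift. -/
def s (n : ℕ) (r : ℕ) : ℕ := if r = 0 then 0 else if r = 1 then h n else 2 * h n + 1

lemma s_zero (n : ℕ) : s n 0 = 0 := rfl
lemma s_one (n : ℕ) : s n 1 = h n := rfl
lemma s_two (n : ℕ) : s n 2 = 2 * h n + 1 := rfl

lemma s_lt (n k r : ℕ) (hk : k < h n) : k + s n r < 3 * h n + 1 := by
  unfold s; split_ifs <;> omega

lemma p_succ (n k r : ℕ) (hk : k < h n) (hr : r < 3) : p (n + 1) (k + s n r) = 3 * p n k + r := by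
  interval_cases r
  · simp [p, s, hk]
  · have h1 : ¬ (k + h n < h n) := by omega
    have h2 : k + h n < 2 * h n := by omega
    simp [p, s, h2]
  · have h1 : ¬ (k + (2 * h n + 1) < h n) := by omega
    have h2 : ¬ (k + (2 * h n + 1) < 2 * h n) := by omega
    have h3 : ¬ (k + (2 * h n + 1) = 2 * h n) := by omega
    have h4 : k + (2 * h n + 1) ≤ 3 * h n := by omega
    have h5 : k + (2 * h n + 1) - 2 * h n - 1 = k := by omega
    simp [p, s, h1, h2, h3, h4, h5]

/-- every index of tower `n+1` is either from a column or a spacer -/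
lemma idx_cases (n k : ℕ) (hk : k < h (n + 1)) :
    (∃ l r, l < h n ∧ r < 3 ∧ k = l + s n r) ∨
    (3 * h n ≤ p (n + 1) k ∧ p (n + 1) k < h (n + 1)
      ∧ ((k = 2 * h n ∧ p (n+1) k = 3 * h n) ∨ (3 * h n < k ∧ p (n+1) k = k))) := by
  have hp := h_pos n
  rw [h_succ] at hk ⊢
  by_cases h1 : k < h n
  · exact Or.inl ⟨k, 0, h1, by norm_num, rfl⟩
  by_cases h2 : k < 2 * h n
  · exact Or.inl ⟨k - h n, 1, by omega, by norm_num, by rw [s_one]; omega⟩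
  by_cases h3 : k = 2 * h n
  · right
    have e : p (n + 1) k = 3 * h n := by
      simp only [p]; rw [if_neg h1, if_neg h2, if_pos h3]
    rw [e]; omega
  by_cases h4 : k ≤ 3 * h n
  · exact Or.inl ⟨k - 2 * h n - 1, 2, by omega, by norm_num, by rw [s_two]; omega⟩
  · right
    have e : p (n + 1) k = k := by
      simp only [p]; rw [if_neg h1, if_neg h2, if_neg h3, if_neg h4]
    rw [e]; omega

lemma p_lt (n k : ℕ) (hk : k < h n) : p n k < h n := by
  induction n generalizing k with
  | zero => simp [p, chaconH]
  | succ n ih =>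
    rcases idx_cases n k hk with ⟨l, r, hl, hr, rfl⟩ | ⟨_, h2, _⟩
    · rw [p_succ n l r hl hr, h_succ]; have := ih l hl; omega
    · exact h2

lemma p_inj (n k l : ℕ) (hk : k < h n) (hl : l < h n) (hkl : p n k = p n l) : k = l := by
  induction n generalizing k l with
  | zero => simp [chaconH] at hk hl; omega
  | succ n ih =>
    rcases idx_cases n k hk with ⟨k', r, hk', hr, rfl⟩ | ⟨h1, h2, h3⟩ <;>
    rcases idx_cases n l hl with ⟨l', r', hl', hr', rfl⟩ | ⟨h1', h2', h3'⟩
    · rw [p_succ n _ _ hk' hr, p_succ n _ _ hl' hr'] at hkl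
      have : r = r' := by omega
      subst this
      rw [ih k' l' hk' hl' (by omega)]
    · rw [p_succ n _ _ hk' hr] at hkl
      have := p_lt n k' hk'; omega
    · rw [p_succ n _ _ hl' hr'] at hkl
      have := p_lt n l' hl'; omega
    · omega

lemma p_surj (n q : ℕ) (hq : q < h n) : ∃ k, k < h n ∧ p n k = q := by
  let f : Fin (h n) → Fin (h n) := fun k => ⟨p n k, p_lt n k k.2⟩
  have hf : Function.Injective f := by
    intro a b hab
    have := congrArg Fin.val hab
    exact Fin.ext (p_inj n a b a.2 b.2 this)
  obtain ⟨k, hk⟩ := (Finite.injective_iff_surjective.mp hf) ⟨q, hq⟩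
  exact ⟨k, k.2, congrArg Fin.val hk⟩

lemma p_zero (n : ℕ) : p n 0 = 0 := by
  induction n with
  | zero => rfl
  | succ n ih =>
    have := p_succ n 0 0 (h_pos n) (by norm_num)
    simpa [ih, s_zero] using this

/-- ternary floor -/
def fl (n : ℕ) (x : ChaconX) : ℕ := ⌊(x : ℝ) * 3 ^ n⌋₊

lemma fl_succ (n : ℕ) (x : ChaconX) : fl (n + 1) x / 3 = fl n x := by
  unfold fl
  have hx : (0 : ℝ) ≤ (x : ℝ) := x.2
  have := Nat.floor_div_natCast ((x : ℝ) * 3 ^ (n + 1)) 3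
  rw [← this]
  congr 1
  push_cast
  rw [pow_succ]; ring

/-- ternary digit, identifies the subcolumn -/
def dig (n : ℕ) (x : ChaconX) : ℕ := fl (n + 1) x % 3

lemma dig_lt (n : ℕ) (x : ChaconX) : dig n x < 3 := Nat.mod_lt _ (by norm_num)

/-- level `k` of tower `n`, as a subset of `X` -/
def lev (n k : ℕ) : Set ChaconX := {x | (x : ℝ) ∈ chaconLevel n k}

lemma mem_lev (n k : ℕ) (x : ChaconX) : x ∈ lev n k ↔ fl n x = p n k := by
  have hx : (0 : ℝ) ≤ (x : ℝ) := x.2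
  have h3 : (0 : ℝ) < 3 ^ n := by positivity
  simp only [lev, chaconLevel, mem_ofPred_eq, mem_Ico, L_eq, fl]
  rw [Nat.floor_eq_iff (by positivity)]
  rw [show (p n k : ℝ) * (3 : ℝ)⁻¹ ^ n + (3 : ℝ)⁻¹ ^ n = ((p n k : ℝ) + 1) / 3 ^ n by
    rw [inv_pow]; field_simp]
  rw [show (p n k : ℝ) * (3 : ℝ)⁻¹ ^ n = (p n k : ℝ) / 3 ^ n by rw [inv_pow]; rfl]
  rw [div_le_iff₀ h3, lt_div_iff₀ h3]

lemma lev_unique {n k l : ℕ} {x : ChaconX} (hk : k < h n) (hl : l < h n) (h1 : x ∈ lev n k)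
    (h2 : x ∈ lev n l) : k = l := by
  rw [mem_lev] at h1 h2
  exact p_inj n k l hk hl (h1.symm.trans h2)

lemma lev_succ {n k r : ℕ} {x : ChaconX} (hk : k < h n) (hr : r < 3) :
    x ∈ lev (n + 1) (k + s n r) ↔ x ∈ lev n k ∧ dig n x = r := by
  rw [mem_lev, mem_lev, p_succ n k r hk hr, ← fl_succ n, dig]
  omega

lemma lev_up {n k : ℕ} {x : ChaconX} (hk : k < h n) (hx : x ∈ lev n k) :
    x ∈ lev (n + 1) (k + s n (dig n x)) :=
  (lev_succ hk (dig_lt n x)).mpr ⟨hx, rfl⟩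

lemma idx_lt {n k : ℕ} (r : ℕ) (hk : k < h n) : k + s n r < h (n + 1) / 2 := by
  rw [h_half_succ]; exact s_lt n k r hk

lemma idx_lt' {n k : ℕ} (r : ℕ) (hk : k < h n) : k + s n r < h (n + 1) :=
  lt_of_lt_of_le (idx_lt r hk) (Nat.div_le_self _ _)

/-- higher levels of a point -/
lemma lev_ge {n k m : ℕ} {x : ChaconX} (hk : k < h n) (hx : x ∈ lev n k) (hm : n ≤ m) :
    ∃ l, l < h m ∧ x ∈ lev m l := by
  induction m, hm using Nat.le_induction with
  | base => exact ⟨k, hk, hx⟩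
  | succ m _ ih =>
    obtain ⟨l, hl, hxl⟩ := ih
    exact ⟨_, idx_lt' _ hl, lev_up hl hxl⟩

lemma lev_gt_half {n k m : ℕ} {x : ChaconX} (hk : k < h n) (hx : x ∈ lev n k) (hm : n < m) :
    ∃ l, l < h m / 2 ∧ x ∈ lev m l := by
  obtain ⟨m, rfl⟩ : ∃ m', m = m' + 1 := ⟨m - 1, by omega⟩
  obtain ⟨l, hl, hxl⟩ := lev_ge hk hx (show n ≤ m by omega)
  exact ⟨_, idx_lt _ hl, lev_up hl hxl⟩

lemma fl_le {n m : ℕ} (hm : n ≤ m) (x : ChaconX) : fl n x = fl m x / 3 ^ (m - n) := by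
  induction m, hm using Nat.le_induction with
  | base => simp
  | succ m hm ih =>
    rw [ih, ← fl_succ m, Nat.div_div_eq_div_mul, show m + 1 - n = (m - n) + 1 by omega, pow_succ,
      mul_comm]

/-- nestedness: two points in the same level of tower `m` are in the same lower levels -/
lemma lev_nest {n m k l : ℕ} {x y : ChaconX} (hm : n ≤ m) (hx : x ∈ lev m l) (hy : y ∈ lev m l)
    (hxk : x ∈ lev n k) : y ∈ lev n k := by
  rw [mem_lev] at *
  rw [fl_le hm] at *
  rw [hy, ← hx, hxk]

lemma h_growth (n : ℕ) : 6 ^ n ≤ h n := by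
  induction n with
  | zero => exact le_refl _
  | succ n ih => rw [h_succ, pow_succ]; omega

lemma exists_lev (x : ChaconX) : ∃ n k, k < h n ∧ x ∈ lev n k := by
  obtain ⟨n, hn⟩ := pow_unbounded_of_one_lt (x : ℝ) (show (1 : ℝ) < 2 by norm_num)
  have h1 : fl n x < h n := by
    unfold fl
    rw [Nat.floor_lt (mul_nonneg x.2 (by positivity))]
    have : ((6 ^ n : ℕ) : ℝ) ≤ (h n : ℝ) := by exact_mod_cast h_growth n
    calc (x : ℝ) * 3 ^ n < 2 ^ n * 3 ^ n := by
          apply mul_lt_mul_of_pos_right hn (by positivity)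
      _ = ((6 ^ n : ℕ) : ℝ) := by push_cast; rw [← mul_pow]; norm_num
      _ ≤ _ := this
  obtain ⟨k, hk, hpk⟩ := p_surj n _ h1
  exact ⟨n, k, hk, by rw [mem_lev, hpk]⟩

/-- uniform version over large n -/
lemma exists_lev_half (x : ChaconX) : ∃ N, ∀ n, N ≤ n → ∃ k, k < h n / 2 ∧ x ∈ lev n k := by
  obtain ⟨n, k, hk, hx⟩ := exists_lev x
  exact ⟨n + 1, fun m hm => lev_gt_half hk hx (by omega)⟩

/-! ### The transformation -/

lemma L_diff_succ {n k r : ℕ} (hk : k + 1 < h n) (hr : r < 3) :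
    chaconL (n + 1) (k + s n r + 1) - chaconL (n + 1) (k + s n r) =
      chaconL n (k + 1) - chaconL n k := by
  rw [show k + s n r + 1 = (k + 1) + s n r by ring]
  simp only [L_eq, p_succ n k r (by omega) hr, p_succ n (k + 1) r hk hr]
  push_cast
  rw [pow_succ]; ring

lemma L_diff_le {n k m : ℕ} {x : ChaconX} (hk : k + 1 < h n) (hx : x ∈ lev n k) (hm : n ≤ m) :
    ∃ l, l + 1 < h m ∧ x ∈ lev m l ∧
      chaconL m (l + 1) - chaconL m l = chaconL n (k + 1) - chaconL n k := by
  induction m, hm using Nat.le_induction with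
  | base => exact ⟨k, hk, hx, rfl⟩
  | succ m _ ih =>
    obtain ⟨l, hl, hxl, he⟩ := ih
    refine ⟨l + s m (dig m x), ?_, lev_up (by omega) hxl, ?_⟩
    · have := idx_lt' (dig m x) hl; omega
    · rw [L_diff_succ hl (dig_lt m x), he]

lemma L_diff_wd {n k m l : ℕ} {x : ChaconX} (hk : k + 1 < h n) (hx : x ∈ lev n k)
    (hl : l + 1 < h m) (hy : x ∈ lev m l) :
    chaconL m (l + 1) - chaconL m l = chaconL n (k + 1) - chaconL n k := by
  obtain ⟨a, ha, hxa, e1⟩ := L_diff_le hk hx (le_max_left n m)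
  obtain ⟨b, hb, hxb, e2⟩ := L_diff_le hl hy (le_max_right n m)
  have : a = b := lev_unique (by omega) (by omega) hxa hxb
  subst this
  rw [← e1, ← e2]

lemma L_nonneg (n k : ℕ) : 0 ≤ chaconL n k := by rw [L_eq]; positivity

lemma T_val {n k : ℕ} {x : ChaconX} (hk : k + 1 < h n) (hx : x ∈ lev n k) :
    ((chaconT x : ChaconX) : ℝ) = (x : ℝ) - chaconL n k + chaconL n (k + 1) := by
  have hex : ∃ q : ℕ × ℕ, q.2 + 1 < chaconH q.1 ∧ (x : ℝ) ∈ chaconLevel q.1 q.2 :=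
    ⟨(n, k), hk, hx⟩
  have h0 : chaconT0 (x : ℝ) = (x : ℝ) - chaconL n k + chaconL n (k + 1) := by
    unfold chaconT0
    rw [dif_pos hex]
    have := L_diff_wd hk hx hex.choose_spec.1 hex.choose_spec.2
    linarith
  have h1 : 0 ≤ (x : ℝ) - chaconL n k := by
    have : (x : ℝ) ∈ chaconLevel n k := hx
    unfold chaconLevel at this
    linarith [this.1]
  have h2 := L_nonneg n (k + 1)
  simp only [chaconT, h0]
  rw [max_eq_right (by linarith)]

lemma T_mem {n k : ℕ} {x : ChaconX} (hk : k + 1 < h n) (hx : x ∈ lev n k) :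
    chaconT x ∈ lev n (k + 1) := by
  have h0 := T_val hk hx
  have h1 : (x : ℝ) ∈ chaconLevel n k := hx
  change ((chaconT x : ChaconX) : ℝ) ∈ chaconLevel n (k + 1)
  rw [h0]
  unfold chaconLevel at *
  exact ⟨by linarith [h1.1], by linarith [h1.2]⟩

/-- every point is in a non-top level, for all large towers -/
lemma exists_nontop (x : ChaconX) (a : ℕ) :
    ∃ N, 1 ≤ N ∧ ∀ n, N ≤ n → ∃ k, k + a < h n / 2 ∧ x ∈ lev n k := by
  obtain ⟨N, k, hk, hx⟩ := exists_lev x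
  have key : ∀ j, ∃ l, l + j < h (N + 1 + j) / 2 ∧ x ∈ lev (N + 1 + j) l := by
    intro j
    induction j with
    | zero => exact lev_gt_half hk hx (by omega)
    | succ j ih =>
      obtain ⟨l, hl, hxl⟩ := ih
      have hl' : l < h (N + 1 + j) := by omega
      refine ⟨l + s (N + 1 + j) (dig (N + 1 + j) x), ?_, lev_up hl' hxl⟩
      rw [show N + 1 + (j + 1) = (N + 1 + j) + 1 by ring, h_half_succ]
      have h2 : s (N + 1 + j) (dig (N + 1 + j) x) ≤ 2 * h (N + 1 + j) + 1 := by
        unfold s; split_ifs <;> omega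
      omega
  refine ⟨N + 1 + a, by omega, fun n hn => ?_⟩
  obtain ⟨l, hl, hxl⟩ := key (n - (N + 1))
  rw [show N + 1 + (n - (N + 1)) = n by omega] at hl hxl
  exact ⟨l, by omega, hxl⟩

lemma T_injective : Function.Injective chaconT := by
  intro x y hxy
  obtain ⟨N, hN, hx⟩ := exists_nontop x 1
  obtain ⟨M, hM, hy⟩ := exists_nontop y 1
  obtain ⟨k, hk, hxk⟩ := hx (max N M) (le_max_left _ _)
  obtain ⟨l, hl, hyl⟩ := hy (max N M) (le_max_right _ _)
  have e1 : k + 1 < h (max N M) := by omega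
  have e2 : l + 1 < h (max N M) := by omega
  have m1 := T_mem e1 hxk
  have m2 := T_mem e2 hyl
  rw [hxy] at m1
  have := lev_unique e1 e2 m1 m2
  have : k = l := by omega
  subst this
  have v1 := T_val e1 hxk
  have v2 := T_val e2 hyl
  rw [hxy] at v1
  apply Subtype.ext
  linarith

lemma T_mem_iff {n k : ℕ} {x : ChaconX} (hk : k + 1 < h n) :
    chaconT x ∈ lev n (k + 1) ↔ x ∈ lev n k := by
  refine ⟨fun hx => ?_, T_mem hk⟩
  -- the candidate preimage
  have hv : (chaconT x : ℝ) ∈ chaconLevel n (k + 1) := hx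
  unfold chaconLevel at hv
  have hL := L_nonneg n k
  let z : ChaconX := ⟨(chaconT x : ℝ) - chaconL n (k + 1) + chaconL n k, by
    simp only [mem_Ici]; linarith [hv.1]⟩
  have hz : z ∈ lev n k := by
    change (z : ℝ) ∈ chaconLevel n k
    unfold chaconLevel
    exact ⟨by simp only [z]; linarith [hv.1], by simp only [z]; linarith [hv.2]⟩
  have hTz : chaconT z = chaconT x := by
    apply Subtype.ext
    rw [T_val hk hz]; simp only [z]; ring
  rwa [T_injective hTz] at hz

/-- surjectivity onto non-bottom levels -/
lemma exists_pre {n k : ℕ} {x : ChaconX} (hk : k + 1 < h n) (hx : x ∈ lev n (k + 1)) :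
    ∃ z, chaconT z = x ∧ z ∈ lev n k := by
  have hv : (x : ℝ) ∈ chaconLevel n (k + 1) := hx
  unfold chaconLevel at hv
  have hL := L_nonneg n k
  let z : ChaconX := ⟨(x : ℝ) - chaconL n (k + 1) + chaconL n k, by
    simp only [mem_Ici]; linarith [hv.1]⟩
  have hz : z ∈ lev n k := by
    change (z : ℝ) ∈ chaconLevel n k
    unfold chaconLevel
    exact ⟨by simp only [z]; linarith [hv.1], by simp only [z]; linarith [hv.2]⟩
  refine ⟨z, ?_, hz⟩
  apply Subtype.ext
  rw [T_val hk hz]; simp only [z]; ring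

lemma Titer_mem {n k j : ℕ} {x : ChaconX} (hk : k + j < h n) :
    chaconT^[j] x ∈ lev n (k + j) ↔ x ∈ lev n k := by
  induction j generalizing x k with
  | zero => rfl
  | succ j ih =>
    rw [Function.iterate_succ_apply, show k + (j + 1) = (k + 1) + j by ring, ih (by omega),
      T_mem_iff (by omega)]

lemma exists_pre_iter {n k j : ℕ} {x : ChaconX} (hk : k + j < h n) (hx : x ∈ lev n (k + j)) :
    ∃ z, chaconT^[j] z = x ∧ z ∈ lev n k := by
  induction j generalizing x with
  | zero => exact ⟨x, rfl, hx⟩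
  | succ j ih =>
    obtain ⟨y, hy, hyl⟩ := exists_pre (k := k + j) (by omega) hx
    obtain ⟨z, hz, hzl⟩ := ih (by omega) hyl
    exact ⟨z, by rw [Function.iterate_succ_apply', hz, hy], hzl⟩

lemma T_aperiodic {j : ℕ} (hj : 0 < j) (x : ChaconX) : chaconT^[j] x ≠ x := by
  intro he
  obtain ⟨N, hN, hx⟩ := exists_nontop x j
  obtain ⟨k, hk, hxk⟩ := hx N le_rfl
  have hk' : k + j < h N := by omega
  have := (Titer_mem hk').mpr hxk
  rw [he] at this
  have := lev_unique (by omega) hk' hxk this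
  omega

/-- the point `0` -/
def z0 : ChaconX := ⟨0, Set.mem_Ici.mpr le_rfl⟩

lemma fl_pos_of_ne {x : ChaconX} (hx : x ≠ z0) : ∃ N, ∀ n, N ≤ n → 1 ≤ fl n x := by
  have hx0 : (0 : ℝ) < (x : ℝ) := lt_of_le_of_ne x.2 (fun e => hx (Subtype.ext e.symm))
  obtain ⟨N, hN⟩ := pow_unbounded_of_one_lt (1 / (x : ℝ)) (show (1 : ℝ) < 3 by norm_num)
  refine ⟨N, fun n hn => ?_⟩
  unfold fl
  rw [Nat.one_le_floor_iff]
  have : (3 : ℝ) ^ N ≤ 3 ^ n := pow_le_pow_right₀ (by norm_num) hn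
  rw [div_lt_iff₀ hx0] at hN
  nlinarith

lemma pos_idx {n k : ℕ} {x : ChaconX} (hx : x ∈ lev n k) (hf : 1 ≤ fl n x) : 1 ≤ k := by
  by_contra hk
  have : k = 0 := by omega
  subst this
  rw [mem_lev, p_zero] at hx
  omega

lemma z0_lev (n : ℕ) : z0 ∈ lev n 0 := by rw [mem_lev, p_zero]; simp [fl, z0]

lemma T_ne_z0 (x : ChaconX) : chaconT x ≠ z0 := by
  intro he
  obtain ⟨N, hN, hx⟩ := exists_nontop x 1
  obtain ⟨k, hk, hxk⟩ := hx N le_rfl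
  have hk' : k + 1 < h N := by omega
  have := T_mem hk' hxk
  rw [he] at this
  have := lev_unique (by omega) hk' (z0_lev N) this
  omega

lemma surj_of_ne {x : ChaconX} (hx : x ≠ z0) : ∃ z, chaconT z = x := by
  obtain ⟨N, hN⟩ := fl_pos_of_ne hx
  obtain ⟨M, hM, hk⟩ := exists_nontop x 0
  obtain ⟨k, hk, hxk⟩ := hk (max N M) (le_max_right _ _)
  have h1 := pos_idx hxk (hN _ (le_max_left _ _))
  obtain ⟨l, rfl⟩ : ∃ l, k = l + 1 := ⟨k - 1, by omega⟩
  obtain ⟨z, hz, _⟩ := exists_pre (by omega) hxk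
  exact ⟨z, hz⟩

lemma Tinv_T (x : ChaconX) : chaconTinv (chaconT x) = x := by
  obtain ⟨N, hN, hx⟩ := exists_nontop x 1
  obtain ⟨k, hk, hxk⟩ := hx N le_rfl
  have hk' : k + 1 < h N := by omega
  have hex : ∃ q : ℕ × ℕ, q.2 + 1 < chaconH q.1 ∧ (chaconT x : ℝ) ∈ chaconLevel q.1 (q.2 + 1) :=
    ⟨(N, k), hk', T_mem hk' hxk⟩
  have h1 := hex.choose_spec.1
  have h2 : x ∈ lev _ _ := (T_mem_iff h1).mp hex.choose_spec.2
  have h3 := T_val h1 h2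
  apply Subtype.ext
  simp only [chaconTinv]
  have : chaconT0inv (chaconT x : ℝ) = x := by
    unfold chaconT0inv
    rw [dif_pos hex]
    linarith
  rw [this]
  exact max_eq_right x.2

lemma Tinv_z0 : chaconTinv z0 = z0 := by
  apply Subtype.ext
  simp only [chaconTinv]
  have : chaconT0inv (z0 : ℝ) = z0 := by
    unfold chaconT0inv
    rw [dif_neg]
    rintro ⟨⟨n, k⟩, hk, hx⟩
    have := lev_unique (by omega) hk (z0_lev n) hx
    simp at this
  rw [this]
  exact max_eq_right z0.2

lemma Tinv_iter (j : ℕ) (x : ChaconX) : chaconTinv^[j] (chaconT^[j] x) = x := by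
  induction j generalizing x with
  | zero => rfl
  | succ j ih =>
    rw [Function.iterate_succ_apply, Function.iterate_succ_apply', Tinv_T, ih]

/-! ### Measurability -/

lemma measurable_fl (n : ℕ) : Measurable (fl n) := by
  unfold fl
  exact Nat.measurable_floor.comp ((measurable_subtype_coe).mul_const _)

lemma measurable_dig (n : ℕ) : Measurable (dig n) :=
  (measurable_of_countable (fun q : ℕ => q % 3)).comp (measurable_fl (n + 1))

lemma measurableSet_lev (n k : ℕ) : MeasurableSet (lev n k) := by
  have : lev n k = fl n ⁻¹' {p n k} := by ext x; simp [mem_lev]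
  rw [this]
  exact measurable_fl n (measurableSet_singleton _)

lemma measurable_T : Measurable chaconT := by
  apply Measurable.subtype_mk
  apply Measurable.max measurable_const
  suffices hh : Measurable (fun x : ChaconX => ((chaconT x : ChaconX) : ℝ)) by
    have : (fun x : ChaconX => chaconT0 (x : ℝ)) = fun x : ChaconX => ((chaconT x : ChaconX) : ℝ) := by
      funext x
      obtain ⟨N, hN, hx⟩ := exists_nontop x 1
      obtain ⟨k, hk, hxk⟩ := hx N le_rfl
      have hk' : k + 1 < h N := by omega
      have hex : ∃ q : ℕ × ℕ, q.2 + 1 < chaconH q.1 ∧ (x : ℝ) ∈ chaconLevel q.1 q.2 :=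
        ⟨(N, k), hk', hxk⟩
      rw [T_val hex.choose_spec.1 hex.choose_spec.2, chaconT0, dif_pos hex]
    rw [this]; exact hh
  intro S hS
  have : (fun x : ChaconX => ((chaconT x : ChaconX) : ℝ)) ⁻¹' S =
      ⋃ (n : ℕ) (k : ℕ) (_ : k + 1 < h n), (lev n k ∩
        (fun x : ChaconX => (x : ℝ) - chaconL n k + chaconL n (k + 1)) ⁻¹' S) := by
    ext x
    simp only [mem_preimage, mem_iUnion, mem_inter_iff]
    constructor
    · intro hx
      obtain ⟨N, hN, hx'⟩ := exists_nontop x 1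
      obtain ⟨k, hk, hxk⟩ := hx' N le_rfl
      have hk' : k + 1 < h N := by omega
      exact ⟨N, k, hk', hxk, by rw [← T_val hk' hxk]; exact hx⟩
    · rintro ⟨n, k, hk, hxk, hx⟩
      rw [T_val hk hxk]; exact hx
  rw [this]
  refine MeasurableSet.iUnion fun n => MeasurableSet.iUnion fun k => MeasurableSet.iUnion fun _ => ?_
  refine (measurableSet_lev n k).inter ?_
  have : Measurable (fun x : ChaconX => (x : ℝ) - chaconL n k + chaconL n (k + 1)) := by fun_prop
  exact this hS

instance : StandardBorelSpace ChaconX := MeasurableSet.standardBorel measurableSet_Ici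

end Chacon
end


noncomputable section

namespace Chacon

/-! ### Abstract ergodic theory of injective maps -/

section abstractErg
variable {α : Type*} [MeasurableSpace α] {f : α → α}

/-- saturation of a set under a map -/
def sat (f : α → α) (S : Set α) : Set α := {x | ∃ a b : ℕ, ∃ y ∈ S, f^[a] x = f^[b] y}

lemma subset_sat (S : Set α) : S ⊆ sat f S := fun x hx => ⟨0, 0, x, hx, rfl⟩

lemma sat_inv (S : Set α) : f ⁻¹' (sat f S) = sat f S := by
  ext x
  constructor
  · rintro ⟨a, b, y, hy, e⟩
    exact ⟨a + 1, b, y, hy, by rw [Function.iterate_succ_apply]; exact e⟩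
  · rintro ⟨a, b, y, hy, e⟩
    refine ⟨a, b + 1, y, hy, ?_⟩
    rw [← Function.iterate_succ_apply, Function.iterate_succ_apply', e,
      Function.iterate_succ_apply']

lemma sat_eq (S : Set α) : sat f S = ⋃ (a : ℕ) (b : ℕ), f^[a] ⁻¹' (f^[b] '' S) := by
  ext x
  simp only [sat, mem_iUnion, mem_preimage, mem_image]
  constructor
  · rintro ⟨a, b, y, hy, e⟩; exact ⟨a, b, y, hy, e.symm⟩
  · rintro ⟨a, b, y, hy, e⟩; exact ⟨a, b, y, hy, e.symm⟩

lemma emb_iter (hf : MeasurableEmbedding f) (n : ℕ) : MeasurableEmbedding f^[n] := by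
  induction n with
  | zero => exact MeasurableEmbedding.id
  | succ n ih => rw [Function.iterate_succ]; exact ih.comp hf

lemma measurableSet_sat (hf : MeasurableEmbedding f) {S : Set α} (hS : MeasurableSet S) :
    MeasurableSet (sat f S) := by
  rw [sat_eq]
  exact MeasurableSet.iUnion fun a => MeasurableSet.iUnion fun b =>
    (emb_iter hf a).measurable ((emb_iter hf b).measurableSet_image.mpr hS)

lemma map_iter (hf : MeasurableEmbedding f) {μ : Measure α} (hμ : μ.map f = μ) (n : ℕ) :
    μ.map f^[n] = μ :=
  (MeasurePreserving.iterate ⟨hf.measurable, hμ⟩ n).map_eq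

lemma meas_image_iter (hf : MeasurableEmbedding f) {μ : Measure α} (hμ : μ.map f = μ) (n : ℕ)
    (S : Set α) : μ (f^[n] '' S) = μ S := by
  conv_lhs => rw [← map_iter hf hμ n]
  rw [(emb_iter hf n).map_apply, preimage_image_eq _ (emb_iter hf n).injective]

lemma meas_preimage_iter (hf : MeasurableEmbedding f) {μ : Measure α} (hμ : μ.map f = μ) (n : ℕ)
    (S : Set α) : μ (f^[n] ⁻¹' S) = μ S := by
  conv_rhs => rw [← map_iter hf hμ n]
  rw [(emb_iter hf n).map_apply]

lemma sat_null (hf : MeasurableEmbedding f) {μ : Measure α} (hμ : μ.map f = μ)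
    {S : Set α} (hS : μ S = 0) : μ (sat f S) = 0 := by
  rw [sat_eq]
  refine measure_iUnion_null fun a => measure_iUnion_null fun b => ?_
  rw [meas_preimage_iter hf hμ, meas_image_iter hf hμ, hS]

lemma toErgodic (hf : MeasurableEmbedding f) {μ : Measure α} (hμ : μ.map f = μ)
    (he : MeasErgodic μ f) : Ergodic f μ := by
  refine { toMeasurePreserving := ⟨hf.measurable, hμ⟩, aeconst_set := fun S hS hinv => ?_ }
  rw [Filter.eventuallyConst_set]
  rcases he S hS hinv with h1 | h1
  · right
    rw [measure_eq_zero_iff_ae_notMem] at h1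
    exact h1
  · left; exact h1

lemma const_density (hf : MeasurableEmbedding f) {ν ρ : Measure α} [SigmaFinite ν] [SigmaFinite ρ]
    (hν : ν.map f = ν) (hρ : ρ.map f = ρ) (he : MeasErgodic ρ f) (hac : ν ≪ ρ) :
    ∃ c : ℝ≥0∞, ν = c • ρ := by
  set g := ν.rnDeriv ρ with hg
  have hgm : Measurable g := Measure.measurable_rnDeriv ν ρ
  have hw : ρ.withDensity g = ν := Measure.withDensity_rnDeriv_eq ν ρ hac
  have h1 : ρ.withDensity (g ∘ f) = ν := by
    ext S hS
    have e : f ⁻¹' (f '' S) = S := preimage_image_eq _ hf.injective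
    have hfS : MeasurableSet (f '' S) := hf.measurableSet_image.mpr hS
    have h2 : ν S = ν (f '' S) := by
      conv_rhs => rw [← hν]
      rw [hf.map_apply, e]
    rw [h2, ← hw, withDensity_apply _ hS, withDensity_apply _ hfS]
    conv_rhs => rw [← hρ]
    rw [setLIntegral_map hfS hgm hf.measurable, e]
    rfl
  have h2 : g ∘ f =ᵐ[ρ] g := by
    rw [← hw] at h1
    haveI : SigmaFinite (ρ.withDensity (g ∘ f)) := by rw [h1, hw]; infer_instance
    exact (withDensity_eq_iff_of_sigmaFinite (hgm.comp hf.measurable).aemeasurable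
      hgm.aemeasurable).mp h1
  obtain ⟨c, hc⟩ := (toErgodic hf hρ he).ae_eq_const_of_ae_eq_comp₀ hgm.nullMeasurable h2
  refine ⟨c, ?_⟩
  rw [← hw, withDensity_congr_ae hc]
  exact withDensity_const c

lemma sing_or_const (hf : MeasurableEmbedding f) {ν ρ : Measure α} [SigmaFinite ν] [SigmaFinite ρ]
    (hν : ν.map f = ν) (hρ : ρ.map f = ρ) (heν : MeasErgodic ν f) (he : MeasErgodic ρ f) :
    ν ⟂ₘ ρ ∨ ∃ c : ℝ≥0∞, ν = c • ρ := by
  obtain ⟨S, hS, h1, h2⟩ := Measure.mutuallySingular_singularPart ν ρ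
  have h3 : ρ (sat f Sᶜ) = 0 := sat_null hf hρ h2
  have hm := measurableSet_sat hf hS.compl
  rcases heν _ hm (sat_inv _) with h4 | h4
  · right
    apply const_density hf hν hρ he
    intro N hN
    have h5 : ν Sᶜ = 0 := measure_mono_null (subset_sat _) h4
    have h6 : ν (N ∩ S) = 0 := by
      rw [← Measure.singularPart_add_rnDeriv ν ρ, Measure.add_apply,
        measure_mono_null inter_subset_right h1,
        withDensity_absolutelyContinuous ρ _ (measure_mono_null inter_subset_left hN), add_zero]
    refine measure_mono_null (t := (N ∩ S) ∪ Sᶜ) ?_ (measure_union_null h6 h5)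
    intro x hx
    by_cases hxS : x ∈ S
    · exact Or.inl ⟨hx, hxS⟩
    · exact Or.inr hxS
  · left
    exact ⟨(sat f Sᶜ)ᶜ, hm.compl, h4, by rw [compl_compl]; exact h3⟩

end abstractErg

end Chacon
end


set_option linter.unusedSectionVars false
noncomputable section

namespace Chacon

local notation "h" => chaconH

/-! ### Boxes and coordinate maps on the Cartesian power -/

section prodBasics
variable {ι : Type} [Fintype ι]

/-- box of levels of tower `n` -/
def Box (n : ℕ) (k : ι → ℕ) : Set (ι → ChaconX) := {x | ∀ i, x i ∈ lev n (k i)}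

/-- apply `T` to the coordinates in `E` -/
def TE (E : Set ι) (x : ι → ChaconX) : ι → ChaconX := fun i => if i ∈ E then chaconT (x i) else x i

lemma measurableSet_Box (n : ℕ) (k : ι → ℕ) : MeasurableSet (Box n k) := by
  have : Box n k = ⋂ i, (fun x : ι → ChaconX => x i) ⁻¹' lev n (k i) := by
    ext x; simp [Box]
  rw [this]
  exact MeasurableSet.iInter fun i => measurable_pi_apply i (measurableSet_lev n (k i))

lemma emb_Td : MeasurableEmbedding (chaconTd ι) := by
  apply Measurable.measurableEmbedding
  · exact measurable_pi_lambda _ fun i => measurable_T.comp (measurable_pi_apply i)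
  · intro x y hxy
    funext i
    exact T_injective (congrFun hxy i)

lemma emb_TE (E : Set ι) : MeasurableEmbedding (TE E) := by
  apply Measurable.measurableEmbedding
  · refine measurable_pi_lambda _ fun i => ?_
    unfold TE
    by_cases hi : i ∈ E
    · simp only [hi, if_true]; exact measurable_T.comp (measurable_pi_apply i)
    · simp only [hi, if_false]; exact measurable_pi_apply i
  · intro x y hxy
    funext i
    have := congrFun hxy i
    unfold TE at this
    by_cases hi : i ∈ E
    · simp only [hi, if_true] at this; exact T_injective this
    · simpa only [hi, if_false] using this

lemma TE_comm (E : Set ι) (x : ι → ChaconX) : TE E (chaconTd ι x) = chaconTd ι (TE E x) := by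
  funext i; by_cases hi : i ∈ E <;> simp [TE, chaconTd, hi]

lemma TE_compl (E : Set ι) (x : ι → ChaconX) : TE Eᶜ (TE E x) = chaconTd ι x := by
  funext i; unfold TE chaconTd; by_cases hi : i ∈ E <;> simp [hi]

lemma Td_iter (j : ℕ) (x : ι → ChaconX) (i : ι) : (chaconTd ι)^[j] x i = chaconT^[j] (x i) := by
  induction j generalizing x with
  | zero => rfl
  | succ j ih => rw [Function.iterate_succ_apply, ih, Function.iterate_succ_apply]; rfl

lemma TE_iter (E : Set ι) (j : ℕ) (x : ι → ChaconX) (i : ι) :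
    (TE E)^[j] x i = if i ∈ E then chaconT^[j] (x i) else x i := by
  induction j generalizing x with
  | zero => simp
  | succ j ih =>
    rw [Function.iterate_succ_apply, ih]
    unfold TE
    split_ifs with hi
    · rw [Function.iterate_succ_apply]
    · rfl

lemma mem_Cd (n : ℕ) (x : ι → ChaconX) :
    x ∈ chaconCd ι n ↔ ∀ i, ∃ k, k < h n / 2 ∧ x i ∈ lev n k := Iff.rfl

lemma Cd_eq (n : ℕ) : chaconCd ι n = ⋃ k : ι → Fin (h n / 2), Box n (fun i => (k i : ℕ)) := by
  ext x
  rw [mem_Cd, mem_iUnion]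
  constructor
  · intro hx
    choose k hk hxk using hx
    exact ⟨fun i => ⟨k i, hk i⟩, hxk⟩
  · rintro ⟨k, hk⟩ i
    exact ⟨k i, (k i).2, hk i⟩

lemma measurableSet_Cd (n : ℕ) : MeasurableSet (chaconCd ι n) := by
  rw [Cd_eq]; exact MeasurableSet.iUnion fun k => measurableSet_Box n _

lemma Cd_mono {n m : ℕ} (hnm : n ≤ m) : chaconCd ι n ⊆ chaconCd ι m := by
  intro x hx
  rcases hnm.eq_or_lt with rfl | hlt
  · exact hx
  · intro i
    obtain ⟨k, hk, hxk⟩ := hx i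
    exact lev_gt_half (lt_of_lt_of_le hk (Nat.div_le_self _ _)) hxk hlt

lemma exists_unif (x : ι → ChaconX) (a : ℕ) :
    ∃ N, 1 ≤ N ∧ ∀ n, N ≤ n → ∀ i, ∃ k, k + a < h n / 2 ∧ x i ∈ lev n k := by
  choose N hN hx using fun i => exists_nontop (x i) a
  refine ⟨1 + ∑ i, N i, by omega, fun n hn i => hx i n ?_⟩
  have : N i ≤ ∑ i, N i := Finset.single_le_sum (f := N) (fun _ _ => Nat.zero_le _) (Finset.mem_univ i)
  omega

lemma exists_Cd (x : ι → ChaconX) : ∃ n, x ∈ chaconCd ι n := by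
  obtain ⟨N, _, hN⟩ := exists_unif x 0
  exact ⟨N, (mem_Cd N x).mpr fun i => by simpa using hN N le_rfl i⟩

lemma iUnion_Cd : (⋃ n, chaconCd ι n) = univ := by
  ext x; simpa using exists_Cd x

lemma lev_val_lt {n k : ℕ} (hk : k < h n) {x : ChaconX} (hx : x ∈ lev n k) : (x : ℝ) ≤ h n := by
  rw [mem_lev] at hx
  have h1 := p_lt n k hk
  have h2 : (x : ℝ) * 3 ^ n < h n := by
    rw [← Nat.floor_lt (mul_nonneg x.2 (by positivity))]
    change fl n x < _
    omega
  have h3 : (1 : ℝ) ≤ 3 ^ n := one_le_pow₀ (by norm_num)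
  have h4 : (0 : ℝ) ≤ x := x.2
  nlinarith

lemma bounded_Cd (n : ℕ) : Bornology.IsBounded (chaconCd ι n) := by
  apply (Metric.isBounded_closedBall (x := fun _ : ι => z0) (r := (h n : ℝ))).subset
  intro x hx
  rw [Metric.mem_closedBall, dist_pi_le_iff (by positivity)]
  intro i
  obtain ⟨k, hk, hxk⟩ := hx i
  have h1 := lev_val_lt (lt_of_lt_of_le hk (Nat.div_le_self _ _)) hxk
  have h2 : (0 : ℝ) ≤ x i := (x i).2
  rw [Subtype.dist_eq, Real.dist_eq]
  simp only [z0, sub_zero]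
  rw [abs_of_nonneg h2]
  exact h1

lemma bounded_subset_Cd {A : Set (ι → ChaconX)} (hA : Bornology.IsBounded A) :
    ∃ n, A ⊆ chaconCd ι n := by
  obtain ⟨r, hr⟩ := hA.subset_closedBall (fun _ : ι => z0)
  obtain ⟨n, hn⟩ := pow_unbounded_of_one_lt r (show (1 : ℝ) < 2 by norm_num)
  refine ⟨n + 1, fun x hx i => ?_⟩
  have h1 := hr hx
  rw [Metric.mem_closedBall] at h1
  have h2 := (dist_le_pi_dist x (fun _ => z0) i).trans h1
  rw [Subtype.dist_eq, Real.dist_eq] at h2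
  simp only [z0, sub_zero] at h2
  have h3 : (x i : ℝ) < 2 ^ n := (le_abs_self _).trans_lt (h2.trans_lt hn)
  have h4 : fl n (x i) < h n := by
    unfold fl
    rw [Nat.floor_lt (mul_nonneg (x i).2 (by positivity))]
    have : ((6 ^ n : ℕ) : ℝ) ≤ (h n : ℝ) := by exact_mod_cast h_growth n
    calc (x i : ℝ) * 3 ^ n < 2 ^ n * 3 ^ n := by
          apply mul_lt_mul_of_pos_right h3 (by positivity)
      _ = ((6 ^ n : ℕ) : ℝ) := by push_cast; rw [← mul_pow]; norm_num
      _ ≤ _ := this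
  obtain ⟨k, hk, hpk⟩ := p_surj n _ h4
  have h5 : x i ∈ lev n k := by rw [mem_lev, hpk]
  exact ⟨_, idx_lt _ hk, lev_up hk h5⟩

lemma bf_iff (σ : Measure (ι → ChaconX)) : BoundedlyFinite σ ↔ ∀ n, σ (chaconCd ι n) < ⊤ := by
  constructor
  · intro hb n; exact hb _ (measurableSet_Cd n) (bounded_Cd n)
  · intro hb A _ hA
    obtain ⟨n, hn⟩ := bounded_subset_Cd hA
    exact (measure_mono hn).trans_lt (hb n)

lemma sigmaFinite_of_bf {σ : Measure (ι → ChaconX)} (hb : BoundedlyFinite σ) : SigmaFinite σ :=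
  ⟨⟨{ set := chaconCd ι
      set_mem := fun _ => trivial
      finite := (bf_iff σ).mp hb
      spanning := iUnion_Cd }⟩⟩

lemma sigmaFinite_map_emb {α : Type*} [MeasurableSpace α] {f : α → α} (hf : MeasurableEmbedding f)
    (μ : Measure α) [SigmaFinite μ] : SigmaFinite (μ.map f) := by
  refine ⟨⟨{ set := fun n => (f '' (spanningSets μ n)) ∪ (range f)ᶜ
             set_mem := fun _ => trivial
             finite := fun n => ?_
             spanning := ?_ }⟩⟩
  · rw [hf.map_apply, preimage_union, preimage_image_eq _ hf.injective, preimage_compl,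
      preimage_range, compl_univ, union_empty]
    exact measure_spanningSets_lt_top μ n
  · ext y
    simp only [mem_iUnion, mem_univ, iff_true]
    by_cases hy : y ∈ range f
    · obtain ⟨x, rfl⟩ := hy
      have : x ∈ ⋃ n, spanningSets μ n := by rw [iUnion_spanningSets]; trivial
      obtain ⟨n, hn⟩ := mem_iUnion.mp this
      exact ⟨n, Or.inl ⟨x, hn, rfl⟩⟩
    · exact ⟨0, Or.inr hy⟩

lemma Titer_Box {n a : ℕ} {k : ι → ℕ} (hk : ∀ i, k i + a < h n) :
    (chaconTd ι)^[a] ⁻¹' (Box n (fun i => k i + a)) = Box n k := by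
  ext x
  simp only [Box, mem_preimage, mem_ofPred_eq]
  refine forall_congr' fun i => ?_
  rw [Td_iter, Titer_mem (hk i)]

lemma Box_shift {σ : Measure (ι → ChaconX)} (hinv : σ.map (chaconTd ι) = σ) {n a : ℕ} {k : ι → ℕ}
    (hk : ∀ i, k i + a < h n) : σ (Box n (fun i => k i + a)) = σ (Box n k) := by
  rw [← Titer_Box hk, meas_preimage_iter emb_Td hinv]

lemma TE_Box {n : ℕ} {E : Set ι} {k q : ι → ℕ} (hk : ∀ i, k i < h n)
    (hq : ∀ i, k i = if i ∈ E then q i + 1 else q i) :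
    TE E ⁻¹' (Box n k) = Box n q := by
  ext x
  simp only [Box, mem_preimage, mem_ofPred_eq]
  refine forall_congr' fun i => ?_
  have h1 := hk i
  have h2 := hq i
  unfold TE
  by_cases hi : i ∈ E
  · simp only [hi, if_true] at h2 ⊢
    rw [h2] at h1 ⊢
    exact T_mem_iff h1
  · simp only [hi, if_false] at h2 ⊢
    rw [h2]

/-! ### The interesting transitions -/

/-- digits of a point -/
def digv (n : ℕ) (x : ι → ChaconX) : ι → Fin 3 := fun i => ⟨dig n (x i), dig_lt n (x i)⟩

/-- interesting transition type -/
def IT (τ : ι → Fin 3) : Prop :=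
  (∃ i j, τ i ≠ τ j) ∧ ((∀ i, (τ i : ℕ) ≤ 1) ∨ (∀ i, 1 ≤ (τ i : ℕ)))

/-- middle coordinates -/
def Emid (τ : ι → Fin 3) : Set ι := {i | (τ i : ℕ) = 1}

lemma Emid_proper {τ : ι → Fin 3} (hτ : IT τ) : (Emid τ).Nonempty ∧ (Emid τ)ᶜ.Nonempty := by
  obtain ⟨⟨i, j, hij⟩, h1⟩ := hτ
  have hij' : (τ i : ℕ) ≠ τ j := fun e => hij (Fin.ext e)
  have hi := (τ i).2
  have hj := (τ j).2
  rcases h1 with h1 | h1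
  all_goals
    have hi' := h1 i
    have hj' := h1 j
    by_cases ht : (τ i : ℕ) = 1
    · exact ⟨⟨i, ht⟩, ⟨j, fun e : (τ j : ℕ) = 1 => by omega⟩⟩
    · exact ⟨⟨j, show (τ j : ℕ) = 1 by omega⟩, ⟨i, ht⟩⟩

lemma Box_succ {n : ℕ} {k : ι → ℕ} (hk : ∀ i, k i < h n) (τ : ι → Fin 3) (x : ι → ChaconX) :
    x ∈ Box (n + 1) (fun i => k i + s n (τ i)) ↔ x ∈ Box n k ∧ digv n x = τ := by
  simp only [Box, mem_ofPred_eq]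
  constructor
  · intro hx
    have := fun i => (lev_succ (hk i) (τ i).2).mp (hx i)
    exact ⟨fun i => (this i).1, funext fun i => Fin.ext (this i).2⟩
  · rintro ⟨hx, rfl⟩ i
    exact lev_up (hk i) (hx i)

lemma measurableSet_IT (n : ℕ) : MeasurableSet {x : ι → ChaconX | IT (digv n x)} := by
  have h1 : Measurable (fun x : ι → ChaconX => fun i => dig n (x i)) :=
    measurable_pi_lambda _ fun i => (measurable_dig n).comp (measurable_pi_apply i)
  have : {x : ι → ChaconX | IT (digv n x)} = (fun x : ι → ChaconX => fun i => dig n (x i)) ⁻¹'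
      {t | (∃ i j, t i ≠ t j) ∧ ((∀ i, t i ≤ 1) ∨ (∀ i, 1 ≤ t i))} := by
    ext x
    simp only [IT, digv, mem_ofPred_eq, mem_preimage, ne_eq, Fin.mk.injEq]
  rw [this]
  exact h1 (MeasurableSet.of_discrete)

/-- swap identity -/
lemma swap {σ : Measure (ι → ChaconX)} (hinv : σ.map (chaconTd ι) = σ) {τ : ι → Fin 3}
    (hτ : IT τ) : ∃ τ' : ι → Fin 3, IT τ' ∧ ∀ (n : ℕ) (k : ι → ℕ), (∀ i, 1 ≤ k i) →
      (∀ i, k i < h n) → σ (Box (n + 1) (fun i => k i + s n (τ i))) =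
        (σ.map (TE (Emid τ))) (Box (n + 1) (fun i => k i + s n (τ' i))) := by
  obtain ⟨⟨i₀, j₀, hij⟩, h1 | h1⟩ := hτ
  · refine ⟨fun i => ⟨τ i + 1, by have := h1 i; omega⟩, ⟨⟨i₀, j₀, ?_⟩, Or.inr fun i => ?_⟩, ?_⟩
    · intro e; apply hij; apply Fin.ext
      have := congrArg Fin.val e
      simp only at this; omega
    · simp
    · intro n k hk1 hk
      rw [(emb_TE _).map_apply, TE_Box (q := fun i => k i + s n (τ i) + h n), Box_shift hinv]
      · intro i
        have h2 := s_lt n (k i) (τ i) (hk i)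
        rw [h_succ]; omega
      · intro i; exact idx_lt' _ (hk i)
      · intro i
        have := h1 i
        by_cases ht : (τ i : ℕ) = 1
        · have hm : i ∈ Emid τ := ht
          simp only [hm, if_true, ht, s_one, s_two, Nat.reduceAdd]
          omega
        · have hm : i ∉ Emid τ := ht
          have ht0 : (τ i : ℕ) = 0 := by omega
          simp only [hm, if_false, ht0, s_one, s_zero, Nat.reduceAdd]
          omega
  · refine ⟨fun i => ⟨τ i - 1, by have := (τ i).2; omega⟩, ⟨⟨i₀, j₀, ?_⟩, Or.inl fun i => ?_⟩, ?_⟩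
    · intro e; apply hij; apply Fin.ext
      have := congrArg Fin.val e
      have := h1 i₀
      have := h1 j₀
      simp only at *; omega
    · have := (τ i).2; simp only; omega
    · intro n k hk1 hk
      rw [(emb_TE _).map_apply,
        TE_Box (q := fun i => if i ∈ Emid τ then k i - 1 else k i + h n)]
      · have hsh := Box_shift hinv (n := n + 1) (a := h n + 1)
          (k := fun i => if i ∈ Emid τ then k i - 1 else k i + h n) (by
            intro i
            have := hk i
            rw [h_succ]
            split_ifs <;> omega)
        rw [← hsh]
        congr 2
        funext i
        have := h1 i
        have := (τ i).2
        have := hk1 i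
        by_cases ht : (τ i : ℕ) = 1
        · have hm : i ∈ Emid τ := ht
          simp only [hm, if_true, ht, s_one]
          omega
        · have hm : i ∉ Emid τ := ht
          have ht0 : (τ i : ℕ) = 2 := by omega
          simp only [hm, if_false, ht0, s_two]
          omega
      · intro i; exact idx_lt' _ (hk i)
      · intro i
        have := h1 i
        have := (τ i).2
        have := hk1 i
        by_cases ht : (τ i : ℕ) = 1
        · have hm : i ∈ Emid τ := ht
          simp only [hm, if_true, ht, s_zero, Nat.reduceSub]
          omega
        · have hm : i ∉ Emid τ := ht
          have ht0 : (τ i : ℕ) = 2 := by omega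
          simp only [hm, if_false, ht0, s_one, Nat.reduceSub]

/-- sum of the transported measures -/
def sigHat (σ : Measure (ι → ChaconX)) : Measure (ι → ChaconX) :=
  ∑ τ ∈ (Finset.univ.filter (fun τ : ι → Fin 3 => IT τ)), σ.map (TE (Emid τ))

lemma le_step {σ : Measure (ι → ChaconX)} (hinv : σ.map (chaconTd ι) = σ) {n : ℕ} {k : ι → ℕ}
    (hk1 : ∀ i, 1 ≤ k i) (hk : ∀ i, k i < h n) :
    σ (Box n k ∩ {x | IT (digv n x)}) ≤ sigHat σ (Box n k ∩ {x | IT (digv n x)}) := by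
  have hsub : Box n k ∩ {x | IT (digv n x)} ⊆
      ⋃ τ ∈ (Finset.univ.filter (fun τ : ι → Fin 3 => IT τ)),
        Box (n + 1) (fun i => k i + s n (τ i)) := by
    rintro x ⟨hx, hxI⟩
    simp only [mem_iUnion]
    exact ⟨digv n x, by simpa using hxI, (Box_succ hk _ x).mpr ⟨hx, rfl⟩⟩
  refine (measure_mono hsub).trans ((measure_biUnion_finset_le _ _).trans ?_)
  rw [sigHat, Measure.finsetSum_apply]
  refine Finset.sum_le_sum fun τ hτ => ?_
  have hτ' : IT τ := by simpa using hτ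
  obtain ⟨τ', h1, h2⟩ := swap hinv hτ'
  rw [h2 n k hk1 hk]
  apply measure_mono
  intro x hx
  obtain ⟨h3, h4⟩ := (Box_succ hk τ' x).mp hx
  exact ⟨h3, by change IT (digv n x); rw [h4]; exact h1⟩

lemma le_V {σ : Measure (ι → ChaconX)} (hinv : σ.map (chaconTd ι) = σ) (M : ℕ) :
    ∀ {n : ℕ} {k : ι → ℕ}, (∀ i, 1 ≤ k i) → (∀ i, k i < h n) →
    σ (Box n k ∩ {x | ∃ m, n ≤ m ∧ m < n + M ∧ IT (digv m x)}) ≤ sigHat σ (Box n k) := by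
  induction M with
  | zero =>
    intro n k _ _
    have : Box n k ∩ {x | ∃ m, n ≤ m ∧ m < n + 0 ∧ IT (digv m x)} = ∅ := by
      ext x; simp only [mem_inter_iff, mem_ofPred_eq, mem_empty_iff_false, iff_false]
      rintro ⟨_, m, h1, h2, _⟩; omega
    rw [this]; simp
  | succ M ih =>
    intro n k hk1 hk
    set J := (Finset.univ.filter (fun τ : ι → Fin 3 => ¬ IT τ)) with hJ
    have hsub : Box n k ∩ {x | ∃ m, n ≤ m ∧ m < n + (M + 1) ∧ IT (digv m x)} ⊆
        (Box n k ∩ {x | IT (digv n x)}) ∪ ⋃ τ ∈ J, (Box (n + 1) (fun i => k i + s n (τ i)) ∩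
          {x | ∃ m, (n + 1) ≤ m ∧ m < (n + 1) + M ∧ IT (digv m x)}) := by
      rintro x ⟨hx, m, hm1, hm2, hm3⟩
      by_cases hI : IT (digv n x)
      · exact Or.inl ⟨hx, hI⟩
      · right
        simp only [mem_iUnion]
        refine ⟨digv n x, by simpa [hJ] using hI, (Box_succ hk _ x).mpr ⟨hx, rfl⟩, m, ?_, ?_, hm3⟩
        · rcases hm1.eq_or_lt with rfl | h1
          · exact absurd hm3 hI
          · omega
        · omega
    have hdisj : PairwiseDisjoint (J : Set (ι → Fin 3))
        (fun τ => Box (n + 1) (fun i => k i + s n (τ i))) := by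
      intro τ _ τ' _ hne
      rw [Function.onFun, Set.disjoint_left]
      intro x hx hx'
      exact hne (((Box_succ hk _ x).mp hx).2.symm.trans ((Box_succ hk _ x).mp hx').2)
    calc σ _ ≤ σ (Box n k ∩ {x | IT (digv n x)}) +
          ∑ τ ∈ J, σ (Box (n + 1) (fun i => k i + s n (τ i)) ∩
          {x | ∃ m, (n + 1) ≤ m ∧ m < (n + 1) + M ∧ IT (digv m x)}) :=
          (measure_mono hsub).trans ((measure_union_le _ _).trans
            (add_le_add le_rfl (measure_biUnion_finset_le _ _)))
      _ ≤ sigHat σ (Box n k ∩ {x | IT (digv n x)}) +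
          ∑ τ ∈ J, sigHat σ (Box (n + 1) (fun i => k i + s n (τ i))) := by
          refine add_le_add (le_step hinv hk1 hk) (Finset.sum_le_sum fun τ _ => ih ?_ ?_)
          · intro i; have := hk1 i; omega
          · intro i; exact idx_lt' _ (hk i)
      _ = sigHat σ ((Box n k ∩ {x | IT (digv n x)}) ∪
            ⋃ τ ∈ J, Box (n + 1) (fun i => k i + s n (τ i))) := by
          rw [← measure_biUnion_finset hdisj (fun τ _ => measurableSet_Box _ _), measure_union]
          · rw [Set.disjoint_left]
            rintro x ⟨_, hx⟩ hx'
            simp only [mem_iUnion] at hx'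
            obtain ⟨τ, hτ, hx'⟩ := hx'
            have h2 := ((Box_succ hk _ x).mp hx').2
            have h3 : IT (digv n x) := hx
            rw [h2] at h3
            simp only [hJ, Finset.mem_filter, Finset.mem_univ, true_and] at hτ
            exact hτ h3
          · exact Finset.measurableSet_biUnion _ fun τ _ => measurableSet_Box _ _
      _ ≤ sigHat σ (Box n k) := by
          apply measure_mono
          rintro x (⟨hx, _⟩ | hx)
          · exact hx
          · simp only [mem_iUnion] at hx
            obtain ⟨τ, _, hx⟩ := hx
            exact ((Box_succ hk _ x).mp hx).1

/-- infinitely many interesting transitions -/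
def Om (ι : Type) : Set (ι → ChaconX) := {x | ∀ N, ∃ m, N ≤ m ∧ IT (digv m x)}

lemma measurableSet_Om : MeasurableSet (Om ι) := by
  have : Om ι = ⋂ N, ⋃ m, ⋃ (_ : N ≤ m), {x | IT (digv m x)} := by
    ext x; simp [Om]
  rw [this]
  exact MeasurableSet.iInter fun N => MeasurableSet.iUnion fun m => MeasurableSet.iUnion fun _ =>
    measurableSet_IT m

lemma le_Om {σ : Measure (ι → ChaconX)} (hinv : σ.map (chaconTd ι) = σ) {n : ℕ} {k : ι → ℕ}
    (hk1 : ∀ i, 1 ≤ k i) (hk : ∀ i, k i < h n) :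
    σ (Om ι ∩ Box n k) ≤ sigHat σ (Box n k) := by
  have hsub : Om ι ∩ Box n k ⊆ ⋃ M, (Box n k ∩ {x | ∃ m, n ≤ m ∧ m < n + M ∧ IT (digv m x)}) := by
    rintro x ⟨hx, hxB⟩
    obtain ⟨m, hm, hI⟩ := hx n
    exact mem_iUnion.mpr ⟨m + 1, hxB, m, hm, by omega, hI⟩
  refine (measure_mono hsub).trans ?_
  rw [Monotone.measure_iUnion]
  · exact iSup_le fun M => le_V hinv M hk1 hk
  · intro a b hab x hx
    obtain ⟨h1, m, h2, h3, h4⟩ := hx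
    exact ⟨h1, m, h2, by omega, h4⟩

end prodBasics

end Chacon
end


set_option linter.unusedSectionVars false
noncomputable section

namespace Chacon

local notation "h" => chaconH

section approx
variable {ι : Type} [Fintype ι]

/-- vector of floors -/
def flv (N : ℕ) (x : ι → ChaconX) : ι → ℕ := fun i => fl N (x i)

/-- cylinder algebra -/
def Alg (ι : Type) : Set (Set (ι → ChaconX)) := {Q | ∃ N, ∃ S : Set (ι → ℕ), Q = flv N ⁻¹' S}

lemma Alg_up {Q : Set (ι → ChaconX)} {N : ℕ} {S : Set (ι → ℕ)} (hQ : Q = flv N ⁻¹' S) {M : ℕ}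
    (hM : N ≤ M) : ∃ S' : Set (ι → ℕ), Q = flv M ⁻¹' S' := by
  refine ⟨{q | (fun i => q i / 3 ^ (M - N)) ∈ S}, ?_⟩
  rw [hQ]
  ext x
  simp only [mem_preimage, mem_ofPred_eq]
  have : flv N x = fun i => flv M x i / 3 ^ (M - N) := by
    funext i; exact fl_le hM (x i)
  rw [this]

lemma Alg_isSetAlgebra : IsSetAlgebra (Alg ι) where
  empty_mem := ⟨0, ∅, by simp⟩
  compl_mem := by
    rintro Q ⟨N, S, rfl⟩
    exact ⟨N, Sᶜ, rfl⟩
  union_mem := by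
    rintro Q R ⟨N, S, hQ⟩ ⟨M, S', hR⟩
    obtain ⟨S1, h1⟩ := Alg_up hQ (le_max_left N M)
    obtain ⟨S2, h2⟩ := Alg_up hR (le_max_right N M)
    exact ⟨max N M, S1 ∪ S2, by rw [h1, h2]; rfl⟩

lemma fl_tendsto (x : ChaconX) :
    Filter.Tendsto (fun N => (fl N x : ℝ) / 3 ^ N) Filter.atTop (nhds (x : ℝ)) := by
  have h0 : (0 : ℝ) ≤ x := x.2
  have h1 : Filter.Tendsto (fun N : ℕ => (x : ℝ) - (1 / 3 : ℝ) ^ N) Filter.atTop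
      (nhds ((x : ℝ) - 0)) :=
    tendsto_const_nhds.sub (tendsto_pow_atTop_nhds_zero_of_lt_one (by norm_num) (by norm_num))
  rw [sub_zero] at h1
  refine tendsto_of_tendsto_of_tendsto_of_le_of_le h1 tendsto_const_nhds ?_ ?_
  · intro N
    have h3 : (0 : ℝ) < 3 ^ N := by positivity
    have := Nat.lt_floor_add_one ((x : ℝ) * 3 ^ N)
    change (x : ℝ) - (1 / 3 : ℝ) ^ N ≤ (fl N x : ℝ) / 3 ^ N
    rw [le_div_iff₀ h3, sub_mul, ← mul_pow]
    norm_num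
    unfold fl
    linarith
  · intro N
    have h3 : (0 : ℝ) < 3 ^ N := by positivity
    change (fl N x : ℝ) / 3 ^ N ≤ x
    rw [div_le_iff₀ h3]
    exact Nat.floor_le (by positivity)

lemma measurable_flv (N : ℕ) : Measurable (flv N : (ι → ChaconX) → ι → ℕ) :=
  measurable_pi_lambda _ fun i => (measurable_fl N).comp (measurable_pi_apply i)

lemma Alg_gen : (inferInstance : MeasurableSpace (ι → ChaconX)) =
    MeasurableSpace.generateFrom (Alg ι) := by
  apply le_antisymm
  · change MeasurableSpace.pi ≤ _
    refine iSup_le fun i => ?_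
    rw [← measurable_iff_comap_le]
    refine @Measurable.subtype_mk (ι → ChaconX) ℝ (MeasurableSpace.generateFrom (Alg ι)) _ _
      (fun x : ι → ChaconX => ((x i : ChaconX) : ℝ)) ?_ (fun x => (x i).2)
    refine @measurable_of_tendsto_metrizable _ _ (MeasurableSpace.generateFrom (Alg ι)) _ _ _ _
      (fun N (x : ι → ChaconX) => (fl N (x i) : ℝ) / 3 ^ N) _ (fun N => ?_) ?_
    · have h1 : @Measurable _ _ (MeasurableSpace.generateFrom (Alg ι)) _
          (fun x : ι → ChaconX => fl N (x i)) := by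
        intro S _
        apply MeasurableSpace.measurableSet_generateFrom
        exact ⟨N, {q | q i ∈ S}, rfl⟩
      exact (measurable_from_top (f := fun q : ℕ => (q : ℝ) / 3 ^ N)).comp h1
    · rw [tendsto_pi_nhds]
      intro x
      exact fl_tendsto (x i)
  · apply MeasurableSpace.generateFrom_le
    rintro _ ⟨N, S, rfl⟩
    exact measurable_flv N (MeasurableSet.of_discrete)

lemma le_Alg {σ : Measure (ι → ChaconX)} (hinv : σ.map (chaconTd ι) = σ) {n : ℕ} {k : ι → ℕ}
    (hk1 : ∀ i, 1 ≤ k i) (hk : ∀ i, k i < h n) {Q : Set (ι → ChaconX)} (hQ : Q ∈ Alg ι) :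
    σ (Om ι ∩ (Box n k ∩ Q)) ≤ sigHat σ (Box n k ∩ Q) := by
  obtain ⟨N0, S0, hQ0⟩ := hQ
  set N := max N0 n with hN
  obtain ⟨S, hQ⟩ := Alg_up hQ0 (le_max_left N0 n)
  rw [← hN] at hQ
  have hnN : n ≤ N := le_max_right _ _
  set J : Finset (ι → Fin (h N)) := Finset.univ.filter
    (fun l => Box N (fun i => (l i : ℕ)) ⊆ Box n k ∩ Q ∧ ∀ i, 1 ≤ (l i : ℕ)) with hJ
  have hcov : Box n k ∩ Q ⊆ ⋃ l ∈ J, Box N (fun i => (l i : ℕ)) := by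
    rintro x ⟨hx, hxQ⟩
    choose l hl hxl using fun i => lev_ge (hk i) (hx i) hnN
    simp only [mem_iUnion]
    refine ⟨fun i => ⟨l i, hl i⟩, ?_, hxl⟩
    simp only [hJ, Finset.mem_filter, Finset.mem_univ, true_and]
    constructor
    · intro y hy
      refine ⟨fun i => lev_nest hnN (hxl i) (hy i) (hx i), ?_⟩
      have : flv N y = flv N x := by
        funext i
        exact ((mem_lev _ _ _).mp (hy i)).trans ((mem_lev _ _ _).mp (hxl i)).symm
      rw [hQ] at hxQ ⊢
      rw [mem_preimage, this]; exact hxQ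
    · intro i
      by_contra h0
      have h0' : l i = 0 := by omega
      have h1 := hxl i
      rw [h0'] at h1
      have h2 := lev_nest hnN h1 (z0_lev N) (hx i)
      have h3 := lev_unique (hk i) (h_pos n) h2 (z0_lev n)
      have := hk1 i
      omega
  have hdisj : PairwiseDisjoint (J : Set (ι → Fin (h N)))
        (fun l => Box N (fun i => (l i : ℕ))) := by
    intro l _ l' _ hne
    rw [Function.onFun, Set.disjoint_left]
    intro x hx hx'
    apply hne
    funext i
    exact Fin.ext (lev_unique (l i).2 (l' i).2 (hx i) (hx' i))
  calc σ (Om ι ∩ (Box n k ∩ Q)) ≤ σ (⋃ l ∈ J, (Om ι ∩ Box N (fun i => (l i : ℕ)))) := by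
        apply measure_mono
        rintro x ⟨hxO, hx⟩
        have := hcov hx
        simp only [mem_iUnion] at this ⊢
        obtain ⟨l, hl, hxl⟩ := this
        exact ⟨l, hl, hxO, hxl⟩
    _ ≤ ∑ l ∈ J, σ (Om ι ∩ Box N (fun i => (l i : ℕ))) := measure_biUnion_finset_le _ _
    _ ≤ ∑ l ∈ J, sigHat σ (Box N (fun i => (l i : ℕ))) := by
        refine Finset.sum_le_sum fun l hl => le_Om hinv ?_ fun i => (l i).2
        simp only [hJ, Finset.mem_filter, Finset.mem_univ, true_and] at hl
        exact hl.2
    _ = sigHat σ (⋃ l ∈ J, Box N (fun i => (l i : ℕ))) :=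
        (measure_biUnion_finset hdisj fun l _ => measurableSet_Box _ _).symm
    _ ≤ _ := by
        apply measure_mono
        intro x hx
        simp only [mem_iUnion] at hx
        obtain ⟨l, hl, hxl⟩ := hx
        simp only [hJ, Finset.mem_filter, Finset.mem_univ, true_and] at hl
        exact hl.1 hxl

/-- comparison of finite measures on a generating algebra -/
lemma le_of_alg {α : Type*} [m : MeasurableSpace α] {μ ν : Measure α} [IsFiniteMeasure μ]
    [IsFiniteMeasure ν] {A : Set (Set α)} (hA : IsSetAlgebra A)
    (hgen : m = MeasurableSpace.generateFrom A) (hle : ∀ Q ∈ A, μ Q ≤ ν Q) {B : Set α}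
    (hB : MeasurableSet B) : μ B ≤ ν B := by
  have hd := Measure.MeasureDense.of_generateFrom_isSetAlgebra_finite (μ + ν) hA hgen
  have key : ∀ ε : ℝ, 0 < ε → μ.real B ≤ ν.real B + ε := by
    intro ε hε
    obtain ⟨Q, hQ, hq⟩ := hd.approx B hB (measure_ne_top _ _) (ε / 2) (by linarith)
    have hQm := hd.measurable Q hQ
    have h1 : (μ + ν) (symmDiff B Q) < ENNReal.ofReal (ε / 2) := by
      simpa [Measure.add_apply] using hq
    have h1' : μ.real (symmDiff B Q) + ν.real (symmDiff B Q) < ε / 2 := by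
      have : (μ + ν).real (symmDiff B Q) < ε / 2 := by
        rw [Measure.real, ← ENNReal.lt_ofReal_iff_toReal_lt (measure_ne_top _ _)]
        exact h1
      rwa [measureReal_add_apply] at this
    have h2 : μ.real B ≤ μ.real Q + μ.real (symmDiff B Q) := by
      refine (measureReal_mono ?_ (measure_ne_top _ _)).trans (measureReal_union_le _ _)
      intro x hx
      by_cases hxQ : x ∈ Q
      · exact Or.inl hxQ
      · exact Or.inr (Or.inl ⟨hx, hxQ⟩)
    have h3 : ν.real Q ≤ ν.real B + ν.real (symmDiff B Q) := by
      refine (measureReal_mono ?_ (measure_ne_top _ _)).trans (measureReal_union_le _ _)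
      intro x hx
      by_cases hxQ : x ∈ B
      · exact Or.inl hxQ
      · exact Or.inr (Or.inr ⟨hx, hxQ⟩)
    have h4 : μ.real Q ≤ ν.real Q := ENNReal.toReal_mono (measure_ne_top _ _) (hle Q hQ)
    have h5 : 0 ≤ μ.real (symmDiff B Q) := measureReal_nonneg
    have h6 : 0 ≤ ν.real (symmDiff B Q) := measureReal_nonneg
    linarith
  have h7 : μ.real B ≤ ν.real B := le_of_forall_pos_le_add key
  exact (ENNReal.toReal_le_toReal (measure_ne_top _ _) (measure_ne_top _ _)).mp h7

lemma Box_fin {σ : Measure (ι → ChaconX)} (hb : BoundedlyFinite σ) {n : ℕ} {k : ι → ℕ}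
    (hk : ∀ i, k i < h n) : σ (Box n k) < ⊤ := by
  refine (measure_mono ?_).trans_lt ((bf_iff σ).mp hb (n + 1))
  intro x hx i
  exact lev_gt_half (hk i) (hx i) (Nat.lt_succ_self n)

lemma TE_Box_fin {σ : Measure (ι → ChaconX)} (hb : BoundedlyFinite σ) {n : ℕ} {k : ι → ℕ}
    (hk1 : ∀ i, 1 ≤ k i) (hk : ∀ i, k i < h n) (E : Set ι) : (σ.map (TE E)) (Box n k) < ⊤ := by
  rw [(emb_TE _).map_apply, TE_Box (q := fun i => if i ∈ E then k i - 1 else k i) hk]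
  · apply Box_fin hb
    intro i
    have := hk i
    split_ifs <;> omega
  · intro i
    have := hk1 i
    split_ifs <;> omega

lemma sigHat_Box_fin {σ : Measure (ι → ChaconX)} (hb : BoundedlyFinite σ) {n : ℕ} {k : ι → ℕ}
    (hk1 : ∀ i, 1 ≤ k i) (hk : ∀ i, k i < h n) : sigHat σ (Box n k) < ⊤ := by
  rw [sigHat, Measure.finsetSum_apply]
  exact ENNReal.sum_lt_top.mpr fun τ _ => TE_Box_fin hb hk1 hk _

/-- on good boxes, `σ` restricted to `Om` is dominated by `sigHat` -/
lemma Om_le {σ : Measure (ι → ChaconX)} (hb : BoundedlyFinite σ) (hinv : σ.map (chaconTd ι) = σ)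
    {n : ℕ} {k : ι → ℕ} (hk1 : ∀ i, 1 ≤ k i) (hk : ∀ i, k i < h n) {B : Set (ι → ChaconX)}
    (hB : MeasurableSet B) : σ (Om ι ∩ (Box n k ∩ B)) ≤ sigHat σ (Box n k ∩ B) := by
  have : IsFiniteMeasure (σ.restrict (Om ι ∩ Box n k)) := ⟨by
    rw [Measure.restrict_apply_univ]
    exact (measure_mono inter_subset_right).trans_lt (Box_fin hb hk)⟩
  have : IsFiniteMeasure ((sigHat σ).restrict (Box n k)) := ⟨by
    rw [Measure.restrict_apply_univ]
    exact sigHat_Box_fin hb hk1 hk⟩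
  have := le_of_alg (μ := σ.restrict (Om ι ∩ Box n k)) (ν := (sigHat σ).restrict (Box n k))
    Alg_isSetAlgebra Alg_gen (fun Q hQ => by
      have hQm : MeasurableSet Q := by
        obtain ⟨N, S, rfl⟩ := hQ
        exact measurable_flv N (MeasurableSet.of_discrete)
      rw [Measure.restrict_apply hQm, Measure.restrict_apply hQm, inter_comm Q, inter_comm Q,
        inter_assoc]
      exact le_Alg hinv hk1 hk hQ) hB
  rwa [Measure.restrict_apply hB, Measure.restrict_apply hB, inter_comm B, inter_comm B,
        inter_assoc] at this

/-- regular points -/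
def NZ (ι : Type) : Set (ι → ChaconX) := {x | ∀ i, x i ≠ z0}

lemma NZ_conull {σ : Measure (ι → ChaconX)} (hinv : σ.map (chaconTd ι) = σ) :
    σ (NZ ι)ᶜ = 0 := by
  rw [← hinv, emb_Td.map_apply]
  convert measure_empty (μ := σ)
  ext x
  simp only [mem_preimage, mem_compl_iff, NZ, mem_ofPred_eq, mem_empty_iff_false, iff_false, not_not]
  intro i
  exact T_ne_z0 (x i)

lemma good_box {x : ι → ChaconX} (hx : x ∈ NZ ι) :
    ∃ N, 1 ≤ N ∧ ∀ n, N ≤ n → ∃ k : ι → ℕ, (∀ i, 1 ≤ k i) ∧ (∀ i, k i + 1 < h n / 2) ∧ x ∈ Box n k := by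
  choose M hM using fun i => fl_pos_of_ne (hx i)
  obtain ⟨N, hN1, hN⟩ := exists_unif x 1
  refine ⟨N + ∑ i, M i, by omega, fun n hn => ?_⟩
  choose k hk hxk using hN n (by omega)
  refine ⟨k, fun i => pos_idx (hxk i) (hM i n ?_), hk, hxk⟩
  have : M i ≤ ∑ i, M i := Finset.single_le_sum (f := M) (fun _ _ => Nat.zero_le _) (Finset.mem_univ i)
  omega

/-- a null criterion by good boxes -/
lemma null_of_good {σ : Measure (ι → ChaconX)} (hinv : σ.map (chaconTd ι) = σ)
    {S : Set (ι → ChaconX)} (hS : ∀ n (k : ι → ℕ), (∀ i, 1 ≤ k i) → (∀ i, k i < h n) →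
      σ (S ∩ Box n k) = 0) : σ S = 0 := by
  have hsub : S ⊆ (NZ ι)ᶜ ∪ ⋃ (n : ℕ) (k : ι → ℕ),
      if (∀ i, 1 ≤ k i) ∧ (∀ i, k i < h n) then S ∩ Box n k else ∅ := by
    intro x hx
    by_cases hz : x ∈ NZ ι
    · right
      obtain ⟨N, _, hN⟩ := good_box hz
      obtain ⟨k, h1, h2, h3⟩ := hN N le_rfl
      simp only [mem_iUnion]
      refine ⟨N, k, ?_⟩
      rw [if_pos]
      · exact ⟨hx, h3⟩
      · exact ⟨h1, fun i => by have := h2 i; omega⟩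
    · exact Or.inl hz
  refine measure_mono_null hsub (measure_union_null (NZ_conull hinv)
    (measure_iUnion_null fun n => measure_iUnion_null fun k => ?_))
  split_ifs with hh
  · exact hS n k hh.1 hh.2
  · simp

lemma exists_nonsing {σ : Measure (ι → ChaconX)} (hb : BoundedlyFinite σ)
    (hinv : σ.map (chaconTd ι) = σ) (hOm : σ (Om ι) ≠ 0) :
    ∃ E : Set ι, E.Nonempty ∧ Eᶜ.Nonempty ∧ ¬ (σ.map (TE E)) ⟂ₘ σ := by
  by_contra hcon
  push Not at hcon
  apply hOm
  have hsing : sigHat σ ⟂ₘ σ := by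
    unfold sigHat
    rw [← Measure.sum_coe_finset, Measure.MutuallySingular.sum_left]
    rintro ⟨τ, hτ⟩
    have hτ' : IT τ := by simpa using hτ
    obtain ⟨h1, h2⟩ := Emid_proper hτ'
    exact hcon _ h1 h2
  obtain ⟨S, hS, h1, h2⟩ := hsing
  apply null_of_good hinv
  intro n k hk1 hk
  have h3 := Om_le hb hinv hk1 hk hS
  have h4 : σ (Om ι ∩ (Box n k ∩ S)) = 0 :=
    le_antisymm (h3.trans (by rw [measure_mono_null inter_subset_right h1])) (zero_le)
  refine measure_mono_null (t := (Om ι ∩ (Box n k ∩ S)) ∪ Sᶜ) ?_ (measure_union_null h4 h2)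
  rintro x ⟨hx1, hx2⟩
  by_cases hxS : x ∈ S
  · exact Or.inl ⟨hx1, hx2, hxS⟩
  · exact Or.inr hxS

lemma exists_const {σ : Measure (ι → ChaconX)} (h0 : σ ≠ 0) (hb : BoundedlyFinite σ)
    (hinv : σ.map (chaconTd ι) = σ) (he : MeasErgodic σ (chaconTd ι)) (hOm : σ (Om ι) ≠ 0) :
    ∃ E : Set ι, E.Nonempty ∧ Eᶜ.Nonempty ∧ ∃ c : ℝ≥0∞, c ≠ 0 ∧ c ≠ ⊤ ∧ σ.map (TE E) = c • σ := by
  obtain ⟨E, hE1, hE2, hns⟩ := exists_nonsing hb hinv hOm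
  refine ⟨E, hE1, hE2, ?_⟩
  have := sigmaFinite_of_bf hb
  have := sigmaFinite_map_emb (emb_TE E) σ
  have hcomm : TE E ∘ chaconTd ι = chaconTd ι ∘ TE E := funext fun x => TE_comm E x
  have hinv' : (σ.map (TE E)).map (chaconTd ι) = σ.map (TE E) := by
    rw [Measure.map_map emb_Td.measurable (emb_TE E).measurable, ← hcomm,
      ← Measure.map_map (emb_TE E).measurable emb_Td.measurable, hinv]
  have he' : MeasErgodic (σ.map (TE E)) (chaconTd ι) := by
    intro A hA hAinv
    rw [(emb_TE E).map_apply, (emb_TE E).map_apply]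
    apply he _ ((emb_TE E).measurable hA)
    rw [← preimage_comp, hcomm, preimage_comp, hAinv]
  rcases sing_or_const emb_Td hinv' hinv he' he with hs | ⟨c, hc⟩
  · exact absurd hs hns
  refine ⟨c, ?_, ?_, hc⟩
  · rintro rfl
    rw [zero_smul] at hc
    exact hns (hc ▸ Measure.MutuallySingular.zero_left)
  · rintro rfl
    apply h0
    rw [← Measure.measure_univ_eq_zero]
    apply null_of_good hinv
    intro n k hk1 hk
    have h1 := TE_Box_fin hb hk1 hk E
    rw [hc, Measure.smul_apply, smul_eq_mul] at h1
    rw [univ_inter]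
    by_contra hne
    rw [ENNReal.top_mul hne] at h1
    exact lt_irrefl _ h1

end approx

end Chacon
end


set_option linter.unusedSectionVars false
noncomputable section

namespace Chacon

local notation "h" => chaconH

section visits
variable {ι : Type} [Fintype ι]

lemma idx_pos_up {n m k l : ℕ} {x : ChaconX} (hnm : n ≤ m) (hk1 : 1 ≤ k) (hk : k < h n)
    (hx : x ∈ lev n k) (hxl : x ∈ lev m l) : 1 ≤ l := by
  by_contra h0
  have h0' : l = 0 := by omega
  rw [h0'] at hxl
  have h2 := lev_nest hnm hxl (z0_lev m) hx
  have h3 := lev_unique hk (h_pos n) h2 (z0_lev n)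
  omega

lemma visA {N m k : ℕ} {x : ChaconX} (hNm : N ≤ m) (hk1 : 1 ≤ k) (hk : k + 1 < h N / 2)
    (hx : x ∈ lev N k) (hd : dig m x ≤ 1) : chaconT^[h m] x ∈ chaconC N := by
  have hkN : k < h N := by omega
  obtain ⟨l, hl, hxl⟩ := lev_ge hkN hx hNm
  have hl1 := idx_pos_up hNm hk1 hkN hx hxl
  have hup := lev_up hl hxl
  have hb : l + s m (dig m x) + h m < h (m + 1) := by
    have := s_lt m l (dig m x) hl
    rw [h_succ]; omega
  have h1 := (Titer_mem hb).mpr hup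
  rcases Nat.le_one_iff_eq_zero_or_eq_one.mp hd with h0 | h0
  · rw [h0] at h1
    have h2 : chaconT^[h m] x ∈ lev (m + 1) (l + s m 1) := by
      rw [s_one]; rw [s_zero] at h1; simpa using h1
    have h3 := ((lev_succ hl (by norm_num)).mp h2).1
    exact ⟨k, by omega, lev_nest hNm hxl h3 hx⟩
  · rw [h0] at h1
    have h2 : chaconT^[h m] x ∈ lev (m + 1) ((l - 1) + s m 2) := by
      rw [s_two]; rw [s_one] at h1
      rw [show l - 1 + (2 * h m + 1) = l + h m + h m by omega]; exact h1
    have h3 := ((lev_succ (show l - 1 < h m by omega) (by norm_num)).mp h2).1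
    have h4 : chaconT (chaconT^[h m] x) ∈ lev m l := by
      have := (T_mem_iff (show (l - 1) + 1 < h m by omega)).mpr h3
      rwa [show l - 1 + 1 = l by omega] at this
    have h5 := lev_nest hNm hxl h4 hx
    refine ⟨k - 1, by omega, ?_⟩
    apply (T_mem_iff (show (k - 1) + 1 < h N by omega)).mp
    rwa [show k - 1 + 1 = k by omega]

lemma visB {N m k : ℕ} {x : ChaconX} (hN : 1 ≤ N) (hNm : N ≤ m) (hk : k + 1 < h N / 2)
    (hx : x ∈ lev N k) (hd : 1 ≤ dig m x) : ∃ z, chaconT^[h m] z = x ∧ z ∈ chaconC N := by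
  have hkN : k < h N := by omega
  obtain ⟨l, hl, hxl⟩ := lev_ge hkN hx hNm
  have hl2 : l + 1 < h m := by
    rcases hNm.eq_or_lt with rfl | hlt
    · have := lev_unique hkN hl hx hxl
      omega
    · obtain ⟨l', hl', hxl'⟩ := lev_gt_half hkN hx hlt
      have := lev_unique hl (by omega) hxl hxl'
      have := (h_half m (by omega)).1
      omega
  have hup := lev_up hl hxl
  have hd3 := dig_lt m x
  rcases (show dig m x = 1 ∨ dig m x = 2 by omega) with h0 | h0
  · rw [h0, s_one] at hup
    obtain ⟨z, hz, hz'⟩ := exists_pre_iter (by rw [h_succ]; omega) hup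
    refine ⟨z, hz, k, by omega, ?_⟩
    have h2 : z ∈ lev (m + 1) (l + s m 0) := by rw [s_zero]; simpa using hz'
    exact lev_nest hNm hxl ((lev_succ hl (by norm_num)).mp h2).1 hx
  · rw [h0, s_two, show l + (2 * h m + 1) = (l + 1 + h m) + h m by omega] at hup
    obtain ⟨z, hz, hz'⟩ := exists_pre_iter (by rw [h_succ]; omega) hup
    refine ⟨z, hz, k + 1, by omega, ?_⟩
    have h2 : z ∈ lev (m + 1) ((l + 1) + s m 1) := by rw [s_one]; exact hz'
    have h3 := ((lev_succ hl2 (by norm_num)).mp h2).1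
    have h4 : chaconT x ∈ lev m (l + 1) := (T_mem_iff hl2).mpr hxl
    have h5 : chaconT x ∈ lev N (k + 1) := (T_mem_iff (by omega)).mpr hx
    exact lev_nest hNm h4 h3 h5

lemma visits {x : ι → ChaconX} (hO : x ∈ Om ι) (hx : x ∈ NZ ι) :
    ∃ n, x ∈ chaconCd ι n ∧ ({j : ℕ | (chaconTd ι)^[j] x ∈ chaconCd ι n}.Infinite ∨
      {j : ℕ | x ∈ (chaconTd ι)^[j] '' chaconCd ι n}.Infinite) := by
  obtain ⟨N, hN1, hN⟩ := good_box hx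
  obtain ⟨k, hk1, hk, hxk⟩ := hN N le_rfl
  refine ⟨N, fun i => ⟨k i, by have := hk i; omega, hxk i⟩, ?_⟩
  have hgt : ∀ m, m < h m := fun m => (Nat.lt_pow_self (by norm_num)).trans_le (h_growth m)
  by_cases hA : ∀ M, ∃ m, M ≤ m ∧ ∀ i, dig m (x i) ≤ 1
  · left
    refine Set.infinite_of_forall_exists_gt fun J => ?_
    obtain ⟨m, hm, hd⟩ := hA (max J N)
    refine ⟨h m, fun i => ?_, ?_⟩
    · rw [Td_iter]
      exact visA ((le_max_right _ _).trans hm) (hk1 i) (hk i) (hxk i) (hd i)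
    · exact ((le_max_left _ _).trans hm).trans_lt (hgt m)
  · right
    push Not at hA
    obtain ⟨M, hM⟩ := hA
    refine Set.infinite_of_forall_exists_gt fun J => ?_
    obtain ⟨m, hm, hI⟩ := hO (max (max J N) M)
    have hm1 : M ≤ m := (le_max_right _ _).trans hm
    have hm2 : N ≤ m := ((le_max_right _ _).trans (le_max_left _ _)).trans hm
    have hm3 : J ≤ m := ((le_max_left _ _).trans (le_max_left _ _)).trans hm
    have hd : ∀ i, 1 ≤ dig m (x i) := by
      rcases hI.2 with h1 | h1
      · obtain ⟨i, hi⟩ := hM m hm1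
        have : dig m (x i) ≤ 1 := h1 i
        omega
      · exact h1
    refine ⟨h m, ?_, hm3.trans_lt (hgt m)⟩
    choose z hz hzC using fun i => visB hN1 hm2 (hk i) (hxk i) (hd i)
    exact ⟨z, hzC, funext fun i => by rw [Td_iter]; exact hz i⟩

/-! ### The constant is one -/

lemma map_iter_smul {α : Type*} [MeasurableSpace α] {f : α → α} (hf : Measurable f)
    {σ : Measure α} {c : ℝ≥0∞} (hc : σ.map f = c • σ) (j : ℕ) : σ.map f^[j] = c ^ j • σ := by
  induction j with
  | zero => simp
  | succ j ih =>
    rw [Function.iterate_succ', ← Measure.map_map hf (hf.iterate j), ih, Measure.map_smul, hc,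
      smul_smul, pow_succ]

lemma fin_visits {α : Type*} [MeasurableSpace α] {f : α → α} (hf : MeasurableEmbedding f)
    {σ : Measure α} {c : ℝ≥0∞} (hc : σ.map f = c • σ) (hc1 : c < 1) {A : Set α}
    (hA : σ A ≠ ⊤) : ∀ᵐ x ∂σ, {j : ℕ | f^[j] x ∈ A}.Finite := by
  apply ae_finite_setOfPred_mem (s := fun j => f^[j] ⁻¹' A)
  have : ∀ j, σ (f^[j] ⁻¹' A) = c ^ j * σ A := by
    intro j
    rw [← (emb_iter hf j).map_apply, map_iter_smul hf.measurable hc]; rfl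
  simp_rw [this]
  rw [ENNReal.tsum_mul_right, ENNReal.tsum_geometric]
  refine ENNReal.mul_ne_top ?_ hA
  rw [ENNReal.inv_ne_top]
  exact (tsub_pos_of_lt hc1).ne'

lemma fin_visits' {α : Type*} [MeasurableSpace α] {g : α → α} (hg : MeasurableEmbedding g)
    {σ : Measure α} {c : ℝ≥0∞} (hc : σ.map g = c⁻¹ • σ) (hc0 : c ≠ 0) (hc1 : c < 1) {A : Set α}
    (hA : σ A ≠ ⊤) : ∀ᵐ x ∂σ, {j : ℕ | x ∈ g^[j] '' A}.Finite := by
  apply ae_finite_setOfPred_mem (s := fun j => g^[j] '' A)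
  have hct : c ≠ ⊤ := (hc1.trans ENNReal.one_lt_top).ne
  have : ∀ j, σ (g^[j] '' A) = c ^ j * σ A := by
    intro j
    have h1 : (σ.map g^[j]) (g^[j] '' A) = σ A := by
      rw [(emb_iter hg j).map_apply, preimage_image_eq _ (emb_iter hg j).injective]
    rw [map_iter_smul hg.measurable hc, Measure.smul_apply, smul_eq_mul] at h1
    rw [← h1, ← mul_assoc, ← mul_pow, ENNReal.mul_inv_cancel hc0 hct, one_pow, one_mul]
  simp_rw [this]
  rw [ENNReal.tsum_mul_right, ENNReal.tsum_geometric]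
  refine ENNReal.mul_ne_top ?_ hA
  rw [ENNReal.inv_ne_top]
  exact (tsub_pos_of_lt hc1).ne'

lemma TE_iter_compl (E : Set ι) (j : ℕ) (z : ι → ChaconX) :
    (TE Eᶜ)^[j] ((TE E)^[j] z) = (chaconTd ι)^[j] z := by
  funext i
  rw [TE_iter, TE_iter, Td_iter]
  by_cases hi : i ∈ E <;> simp [hi]

lemma map_compl {σ : Measure (ι → ChaconX)} (hinv : σ.map (chaconTd ι) = σ) {E : Set ι}
    {c : ℝ≥0∞} (hc0 : c ≠ 0) (hct : c ≠ ⊤) (hc : σ.map (TE E) = c • σ) :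
    σ.map (TE Eᶜ) = c⁻¹ • σ := by
  have h1 : (σ.map (TE E)).map (TE Eᶜ) = σ := by
    rw [Measure.map_map (emb_TE _).measurable (emb_TE _).measurable]
    conv_rhs => rw [← hinv]
    congr 1
    exact funext fun x => TE_compl E x
  rw [hc, Measure.map_smul] at h1
  conv_rhs => rw [← h1]
  rw [smul_smul, ENNReal.inv_mul_cancel hc0 hct, one_smul]

lemma Om_null_of_lt {σ : Measure (ι → ChaconX)} (hb : BoundedlyFinite σ)
    (hinv : σ.map (chaconTd ι) = σ) {E : Set ι}
    {c : ℝ≥0∞} (hc0 : c ≠ 0) (hc1 : c < 1) (hc : σ.map (TE E) = c • σ) : σ (Om ι) = 0 := by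
  have hct : c ≠ ⊤ := (hc1.trans ENNReal.one_lt_top).ne
  have hc' := map_compl hinv hc0 hct hc
  have h1 : ∀ᵐ x ∂σ, ∀ n, {j : ℕ | (TE E)^[j] x ∈ chaconCd ι n}.Finite :=
    ae_all_iff.mpr fun n => fin_visits (emb_TE E) hc hc1 ((bf_iff σ).mp hb n).ne
  have h2 : ∀ᵐ x ∂σ, ∀ n, {j : ℕ | x ∈ (TE Eᶜ)^[j] '' chaconCd ι n}.Finite :=
    ae_all_iff.mpr fun n => fin_visits' (emb_TE Eᶜ) hc' hc0 hc1 ((bf_iff σ).mp hb n).ne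
  have h3 : ∀ᵐ x ∂σ, x ∈ NZ ι := by
    rw [ae_iff]; exact NZ_conull hinv
  rw [measure_eq_zero_iff_ae_notMem]
  filter_upwards [h1, h2, h3] with x hx1 hx2 hx3 hO
  obtain ⟨n, hxn, hv | hv⟩ := visits hO hx3
  · apply hv
    refine (hx1 n).subset fun j hj => ?_
    intro i
    rw [TE_iter]
    split_ifs with hi
    · have := hj i; rwa [Td_iter] at this
    · exact hxn i
  · apply hv
    refine (hx2 n).subset fun j hj => ?_
    obtain ⟨z, hz, hzx⟩ := hj
    refine ⟨(TE E)^[j] z, fun i => ?_, ?_⟩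
    · rw [TE_iter]
      split_ifs with hi
      · rw [← Td_iter, hzx]; exact hxn i
      · exact hz i
    · rw [TE_iter_compl, hzx]

/-- if `Om` is not null then `σ` is invariant under some proper `TE E` -/
lemma exists_split {σ : Measure (ι → ChaconX)} (h0 : σ ≠ 0) (hb : BoundedlyFinite σ)
    (hinv : σ.map (chaconTd ι) = σ) (he : MeasErgodic σ (chaconTd ι)) (hOm : σ (Om ι) ≠ 0) :
    ∃ E : Set ι, E.Nonempty ∧ Eᶜ.Nonempty ∧ σ.map (TE E) = σ ∧ σ.map (TE Eᶜ) = σ := by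
  obtain ⟨E, hE1, hE2, c, hc0, hct, hc⟩ := exists_const h0 hb hinv he hOm
  have hc' := map_compl hinv hc0 hct hc
  have : c = 1 := by
    rcases lt_trichotomy c 1 with hlt | heq | hgt
    · exact absurd (Om_null_of_lt hb hinv hc0 hlt hc) hOm
    · exact heq
    · exact absurd (Om_null_of_lt hb hinv (ENNReal.inv_ne_zero.mpr hct)
        (ENNReal.inv_lt_one.mpr hgt) hc') hOm
  subst this
  exact ⟨E, hE1, hE2, by simpa using hc, by simpa using hc'⟩

end visits

end Chacon
end


set_option linter.unusedSectionVars false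
noncomputable section

namespace Chacon

section splitting
variable {ι κ κ' : Type} [Fintype ι] [Fintype κ] [Fintype κ']

def rr (a : κ → ι) (x : ι → ChaconX) : κ → ChaconX := fun i => x (a i)

lemma measurable_rr (a : κ → ι) : Measurable (rr a) :=
  measurable_pi_lambda _ fun i => measurable_pi_apply (a i)

/-- marginal on a subset of coordinates of the restricted measure -/
def mg (σ : Measure (ι → ChaconX)) (a : κ → ι) (R : Set (ι → ChaconX)) : Measure (κ → ChaconX) :=
  (σ.restrict R).map (rr a)

lemma mg_apply (σ : Measure (ι → ChaconX)) (a : κ → ι) (R : Set (ι → ChaconX))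
    {H : Set (κ → ChaconX)} (hH : MeasurableSet H) : mg σ a R H = σ (rr a ⁻¹' H ∩ R) := by
  rw [mg, Measure.map_apply (measurable_rr a) hH, Measure.restrict_apply (measurable_rr a hH)]

lemma rr_TE (a : κ → ι) (x : ι → ChaconX) : rr a (TE (range a) x) = chaconTd κ (rr a x) := by
  funext i; simp [rr, TE, chaconTd]

lemma rr_Td (a : κ → ι) (x : ι → ChaconX) : rr a (chaconTd ι x) = chaconTd κ (rr a x) := rfl

lemma rr_TE_other {a : κ → ι} {b : κ' → ι} (hab : range b = (range a)ᶜ) (x : ι → ChaconX) :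
    rr b (TE (range a) x) = rr b x := by
  funext i
  have : b i ∉ range a := by
    have h1 : b i ∈ range b := ⟨i, rfl⟩
    rw [hab] at h1; exact h1
  simp only [rr, TE, this, if_false]

lemma mg_inv {σ : Measure (ι → ChaconX)} {a : κ → ι} (hE : σ.map (TE (range a)) = σ)
    {R : Set (ι → ChaconX)} (hRinv : TE (range a) ⁻¹' R = R) :
    (mg σ a R).map (chaconTd κ) = mg σ a R := by
  ext H hH
  rw [emb_Td.map_apply, mg_apply _ _ _ hH, mg_apply _ _ _ (emb_Td.measurable hH)]
  conv_rhs => rw [← hE, (emb_TE _).map_apply, preimage_inter, hRinv, ← preimage_comp]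
  congr 2
  ext x
  simp only [mem_preimage, Function.comp, rr_TE]

lemma mg_erg {σ : Measure (ι → ChaconX)} {a : κ → ι} (he : MeasErgodic σ (chaconTd ι))
    (R : Set (ι → ChaconX)) : MeasErgodic (mg σ a R) (chaconTd κ) := by
  intro H hH hinv
  rw [mg_apply _ _ _ hH, mg_apply _ _ _ hH.compl]
  have : chaconTd ι ⁻¹' (rr a ⁻¹' H) = rr a ⁻¹' H := by
    conv_rhs => rw [← hinv]
    rfl
  rcases he _ (measurable_rr a hH) this with h1 | h1
  · exact Or.inl (measure_mono_null inter_subset_left h1)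
  · exact Or.inr (measure_mono_null inter_subset_left h1)

lemma Cd_split {a : κ → ι} {b : κ' → ι} (hab : range b = (range a)ᶜ) (n : ℕ) :
    rr a ⁻¹' chaconCd κ n ∩ rr b ⁻¹' chaconCd κ' n = chaconCd ι n := by
  ext x
  constructor
  · rintro ⟨h1, h2⟩ i
    by_cases hi : i ∈ range a
    · obtain ⟨j, rfl⟩ := hi; exact h1 j
    · have : i ∈ range b := by rw [hab]; exact hi
      obtain ⟨j, rfl⟩ := this; exact h2 j
  · intro hx
    exact ⟨fun i => hx _, fun i => hx _⟩

lemma mg_bf {σ : Measure (ι → ChaconX)} (hb : BoundedlyFinite σ) {a : κ → ι} {b : κ' → ι}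
    (hab : range b = (range a)ᶜ) {n : ℕ} {G : Set (κ' → ChaconX)} (hG : G ⊆ chaconCd κ' n) :
    BoundedlyFinite (mg σ a (rr b ⁻¹' G)) := by
  rw [bf_iff]
  intro m
  rw [mg_apply _ _ _ (measurableSet_Cd m)]
  refine (measure_mono ?_).trans_lt ((bf_iff σ).mp hb (max m n))
  rw [← Cd_split hab]
  exact inter_subset_inter (preimage_mono (Cd_mono (le_max_left _ _)))
    (preimage_mono (hG.trans (Cd_mono (le_max_right _ _))))

/-- proportionality -/
lemma mg_prop {σ : Measure (ι → ChaconX)} (hb : BoundedlyFinite σ)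
    (he : MeasErgodic σ (chaconTd ι)) {a : κ → ι} {b : κ' → ι}
    (hE : σ.map (TE (range a)) = σ) (hab : range b = (range a)ᶜ) {n : ℕ} {G : Set (κ' → ChaconX)}
    (hG : G ⊆ chaconCd κ' n) :
    ∃ c : ℝ≥0∞, ∀ H, MeasurableSet H → σ (rr a ⁻¹' H ∩ rr b ⁻¹' G) =
      c * σ (rr a ⁻¹' H ∩ rr b ⁻¹' chaconCd κ' n) := by
  have hR : ∀ G' : Set (κ' → ChaconX), TE (range a) ⁻¹' (rr b ⁻¹' G') = rr b ⁻¹' G' := by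
    intro G'
    ext x
    simp only [mem_preimage, rr_TE_other hab]
  have := sigmaFinite_of_bf (mg_bf hb hab hG)
  have := sigmaFinite_of_bf (mg_bf hb hab (subset_refl (chaconCd κ' n)))
  obtain ⟨c, hc⟩ := const_density (ν := mg σ a (rr b ⁻¹' G)) (ρ := mg σ a (rr b ⁻¹' chaconCd κ' n))
    emb_Td (mg_inv hE (hR _)) (mg_inv hE (hR _)) (mg_erg he _) (by
      apply Measure.AbsolutelyContinuous.mk
      intro S hS h0
      rw [mg_apply _ _ _ hS] at h0 ⊢
      exact measure_mono_null (inter_subset_inter_right _ (preimage_mono hG)) h0)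
  refine ⟨c, fun H hH => ?_⟩
  rw [← mg_apply _ _ _ hH, ← mg_apply _ _ _ hH, hc]
  rfl

lemma split_product {σ : Measure (ι → ChaconX)} (h0 : σ ≠ 0) (hb : BoundedlyFinite σ)
    (he : MeasErgodic σ (chaconTd ι)) {a : κ → ι}
    {b : κ' → ι} (hab : range b = (range a)ᶜ) (hE : σ.map (TE (range a)) = σ)
    (hE' : σ.map (TE (range b)) = σ) :
    ∃ (σ₁ : Measure (κ → ChaconX)) (σ₂ : Measure (κ' → ChaconX)),
      (σ₁ ≠ 0 ∧ BoundedlyFinite σ₁ ∧ σ₁.map (chaconTd κ) = σ₁ ∧ MeasErgodic σ₁ (chaconTd κ)) ∧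
      (σ₂ ≠ 0 ∧ BoundedlyFinite σ₂ ∧ σ₂.map (chaconTd κ') = σ₂ ∧ MeasErgodic σ₂ (chaconTd κ')) ∧
      ∀ H G, MeasurableSet H → MeasurableSet G →
        σ (rr a ⁻¹' H ∩ rr b ⁻¹' G) = σ₁ H * σ₂ G := by
  have hba : range a = (range b)ᶜ := by rw [hab, compl_compl]
  obtain ⟨n₀, hn₀⟩ : ∃ n, σ (chaconCd ι n) ≠ 0 := by
    by_contra hcon
    push Not at hcon
    apply h0
    rw [← Measure.measure_univ_eq_zero, ← iUnion_Cd]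
    exact measure_iUnion_null hcon
  set w := σ (chaconCd ι n₀) with hw
  have hwt : w ≠ ⊤ := ((bf_iff σ).mp hb n₀).ne
  set H₀ := chaconCd κ n₀
  set G₀ := chaconCd κ' n₀
  have hwe : w = σ (rr a ⁻¹' H₀ ∩ rr b ⁻¹' G₀) := by rw [Cd_split hab]
  have hbd : ∀ n H G, MeasurableSet H → G ⊆ chaconCd κ' n →
      σ (rr a ⁻¹' H ∩ rr b ⁻¹' G) * w =
        σ (rr a ⁻¹' H ∩ rr b ⁻¹' G₀) * σ (rr a ⁻¹' H₀ ∩ rr b ⁻¹' G) := by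
    intro n H G hH hG
    obtain ⟨c, hc⟩ := mg_prop hb he hE hab (n := max n n₀)
      (hG.trans (Cd_mono (le_max_left _ _)))
    obtain ⟨c', hc'⟩ := mg_prop hb he hE hab (n := max n n₀) (G := G₀)
      (Cd_mono (le_max_right _ _))
    rw [hwe, hc H hH, hc' H hH, hc _ (measurableSet_Cd n₀), hc' _ (measurableSet_Cd n₀)]
    ring
  have hall : ∀ H G, MeasurableSet H →
      σ (rr a ⁻¹' H ∩ rr b ⁻¹' G) * w =
        σ (rr a ⁻¹' H ∩ rr b ⁻¹' G₀) * σ (rr a ⁻¹' H₀ ∩ rr b ⁻¹' G) := by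
    intro H G hH
    have hm : Monotone fun n => G ∩ chaconCd κ' n :=
      fun n m hnm => inter_subset_inter_right _ (Cd_mono hnm)
    have hU : (⋃ n, G ∩ chaconCd κ' n) = G := by rw [← inter_iUnion, iUnion_Cd, inter_univ]
    have hsup : ∀ H' : Set (κ → ChaconX), σ (rr a ⁻¹' H' ∩ rr b ⁻¹' G) =
        ⨆ n, σ (rr a ⁻¹' H' ∩ rr b ⁻¹' (G ∩ chaconCd κ' n)) := by
      intro H'
      conv_lhs => rw [← hU, preimage_iUnion, inter_iUnion]
      rw [Monotone.measure_iUnion]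
      intro n m hnm
      exact inter_subset_inter_right _ (preimage_mono (hm hnm))
    rw [hsup H, hsup H₀, ENNReal.iSup_mul, ENNReal.mul_iSup]
    exact iSup_congr fun n => hbd n H _ hH inter_subset_right
  have hRb : TE (range a) ⁻¹' (rr b ⁻¹' G₀) = rr b ⁻¹' G₀ := by
    ext x
    simp only [mem_preimage, rr_TE_other hab]
  have hRa : TE (range b) ⁻¹' (rr a ⁻¹' H₀) = rr a ⁻¹' H₀ := by
    ext x
    simp only [mem_preimage, rr_TE_other hba]
  have hwi : w⁻¹ ≠ 0 := ENNReal.inv_ne_zero.mpr hwt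
  have hwit : w⁻¹ ≠ ⊤ := ENNReal.inv_ne_top.mpr hn₀
  refine ⟨mg σ a (rr b ⁻¹' G₀), w⁻¹ • mg σ b (rr a ⁻¹' H₀), ⟨?_, ?_, ?_, ?_⟩, ⟨?_, ?_, ?_, ?_⟩, ?_⟩
  · intro e
    have h1 := mg_apply σ a (rr b ⁻¹' G₀) (measurableSet_Cd (ι := κ) n₀)
    rw [e, ← hwe] at h1
    exact hn₀ h1.symm
  · exact mg_bf hb hab (subset_refl _)
  · exact mg_inv hE hRb
  · exact mg_erg he _
  · intro e
    have h1 := mg_apply σ b (rr a ⁻¹' H₀) (measurableSet_Cd (ι := κ') n₀)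
    rw [inter_comm, ← hwe] at h1
    have h2 := congrArg (fun m : Measure _ => m (chaconCd κ' n₀)) e
    simp only [Measure.smul_apply, smul_eq_mul, h1, Measure.coe_zero, Pi.zero_apply] at h2
    rw [ENNReal.inv_mul_cancel hn₀ hwt] at h2
    exact one_ne_zero h2
  · have h1 := mg_bf hb hba (subset_refl H₀)
    rw [bf_iff] at h1 ⊢
    intro n
    rw [Measure.smul_apply, smul_eq_mul]
    exact ENNReal.mul_lt_top hwit.lt_top (h1 n)
  · rw [Measure.map_smul, mg_inv hE' hRa]
  · intro A hA hinv
    simp only [Measure.smul_apply, smul_eq_mul, mul_eq_zero, hwi, false_or]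
    exact mg_erg he _ A hA hinv
  · intro H G hH hG
    rw [mg_apply _ _ _ hH, Measure.smul_apply, smul_eq_mul, mg_apply _ _ _ hG,
      inter_comm (rr b ⁻¹' G)]
    have h1 := hall H G hH
    calc σ (rr a ⁻¹' H ∩ rr b ⁻¹' G) = σ (rr a ⁻¹' H ∩ rr b ⁻¹' G) * w * w⁻¹ := by
          rw [mul_assoc, ENNReal.mul_inv_cancel hn₀ hwt, mul_one]
      _ = _ := by rw [h1]; ring

end splitting

end Chacon
end


set_option linter.unusedSectionVars false
noncomputable section

namespace Chacon

local notation "h" => chaconH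

section diag
variable {ι : Type} [Fintype ι]

lemma TZ_nat (j : ℕ) : chaconTZ (j : ℤ) = chaconT^[j] := by
  unfold chaconTZ; simp

lemma TZ_neg (j : ℕ) : chaconTZ (-(j : ℤ)) = chaconTinv^[j] := by
  unfold chaconTZ
  rcases Nat.eq_zero_or_pos j with rfl | hj
  · simp
  · rw [if_neg (by omega)]; simp

lemma lev_nonempty {n k : ℕ} : ∃ x : ChaconX, x ∈ lev n k := by
  refine ⟨⟨(p n k : ℝ) / 3 ^ n, Set.mem_Ici.mpr (by positivity)⟩, ?_⟩
  rw [mem_lev, fl]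
  have : (3 : ℝ) ^ n ≠ 0 := by positivity
  simp [div_mul_cancel₀ _ this]

lemma TdZ_Box {n j : ℕ} {q : ι → ℕ} (hq : ∀ i, q i + j < h n) :
    chaconTdZ ι (j : ℤ) '' Box n q = Box n (fun i => q i + j) := by
  ext y
  constructor
  · rintro ⟨x, hx, rfl⟩ i
    change chaconTZ (j : ℤ) (x i) ∈ _
    rw [TZ_nat]
    exact (Titer_mem (hq i)).mpr (hx i)
  · intro hy
    choose z hz hz' using fun i => exists_pre_iter (hq i) (hy i)
    refine ⟨z, hz', funext fun i => ?_⟩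
    change chaconTZ (j : ℤ) (z i) = _
    rw [TZ_nat]; exact hz i

lemma isNBox_Box {n : ℕ} {q : ι → ℕ} (hq : ∀ i, q i < h n / 2) : IsNBox ι n (Box n q) :=
  ⟨q, hq, rfl⟩

lemma isNDiagonal_mk {n : ℕ} (hn : 1 ≤ n) {q : ι → ℕ} {M : ℕ} (hM : ∀ i, q i ≤ M) (i₀ i₁ : ι)
    (h0 : q i₀ = 0) (h1 : q i₁ = M) (hMh : M < h n / 2) :
    IsNDiagonal ι n (⋃ j ∈ Finset.range ((h n / 2 - 1 - M) + 1), Box n (fun i => q i + j)) := by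
  obtain ⟨hh1, hh2⟩ := h_half n hn
  refine ⟨Box n q, h n / 2 - 1 - M, ?_, ?_, ?_, ?_⟩
  · intro j hj
    rw [TdZ_Box (fun i => by have := hM i; omega)]
    exact isNBox_Box (fun i => by have := hM i; omega)
  · intro hsub
    choose y hy using fun i => lev_nonempty (n := n) (k := q i)
    obtain ⟨u, hu⟩ := lev_nonempty (n := n + 1) (k := h n)
    have hu0 : u ∈ lev n 0 := by
      have h2 : u ∈ lev (n + 1) (0 + s n 1) := by rw [s_one]; simpa using hu
      exact ((lev_succ (h_pos n) (by norm_num)).mp h2).1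
    obtain ⟨w, hw, hw'⟩ := exists_pre (n := n + 1) (k := h n - 1) (x := u)
      (by rw [h_succ]; omega) (by rw [show h n - 1 + 1 = h n by omega]; exact hu)
    have hw2 : w ∈ lev n (h n - 1) := by
      have h2 : w ∈ lev (n + 1) ((h n - 1) + s n 0) := by rw [s_zero]; simpa using hw'
      exact ((lev_succ (by omega) (by norm_num)).mp h2).1
    have h3 := hsub ⟨fun i => if i = i₀ then u else y i, fun i => by
      by_cases hi : i = i₀
      · simp only [hi, if_true]; rw [h0]; exact hu0
      · simp only [hi, if_false]; exact hy i, rfl⟩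
    obtain ⟨k, hk, hk'⟩ := h3 i₀
    have h4 : chaconTdZ ι (-1) (fun i => if i = i₀ then u else y i) i₀ = w := by
      change chaconTZ (-1) (if i₀ = i₀ then u else y i₀) = w
      have := TZ_neg 1
      rw [if_pos rfl, show (-1 : ℤ) = -((1 : ℕ) : ℤ) by norm_num, this]
      change chaconTinv u = w
      rw [← hw, Tinv_T]
    rw [h4] at hk'
    have := lev_unique (show k < h n by omega) (by omega) hk' hw2
    omega
  · rw [show (((h n / 2 - 1 - M : ℕ) : ℤ) + 1) = ((h n / 2 - 1 - M + 1 : ℕ) : ℤ) by push_cast; ring,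
      TdZ_Box (fun i => by have := hM i; omega)]
    intro hsub
    choose y hy using fun i => lev_nonempty (n := n) (k := q i + (h n / 2 - 1 - M + 1))
    obtain ⟨k, hk, hk'⟩ := hsub (show y ∈ Box n _ from hy) i₁
    have := lev_unique (show k < h n by omega) (by omega) hk' (hy i₁)
    omega
  · refine iUnion₂_congr fun j hj => ?_
    rw [Finset.mem_range] at hj
    exact (TdZ_Box (fun i => by have := hM i; omega)).symm

/-! ### points without interesting transitions -/

/-- points with no interesting transition from `n` on -/
def YY (ι : Type) (n : ℕ) : Set (ι → ChaconX) :=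
  {x | x ∈ chaconCd ι n ∧ ∀ m, n ≤ m → ¬ IT (digv m x)}

lemma measurableSet_YY (n : ℕ) : MeasurableSet (YY ι n) := by
  have : YY ι n = chaconCd ι n ∩ ⋂ m, ⋂ (_ : n ≤ m), {x | IT (digv m x)}ᶜ := by
    ext x; simp [YY]
  rw [this]
  exact (measurableSet_Cd n).inter (MeasurableSet.iInter fun m => MeasurableSet.iInter fun _ =>
    (measurableSet_IT m).compl)

lemma YY_mono {n m : ℕ} (hnm : n ≤ m) : YY ι n ⊆ YY ι m :=
  fun _ hx => ⟨Cd_mono hnm hx.1, fun l hl => hx.2 l (hnm.trans hl)⟩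

lemma s_gap {m t u : ℕ} (ht : t < 3) (hu : u < 3) (h1 : (s m t : ℤ) - s m u < h m)
    (h2 : (s m u : ℤ) - s m t < h m) : t = u := by
  have := h_pos m
  interval_cases t <;> interval_cases u <;> simp only [s_zero, s_one, s_two] at h1 h2 <;>
    push_cast at h1 h2 <;> first | rfl | omega

/-- the key descent -/
lemma descend {m : ℕ} (hm : 1 ≤ m) {α β t u : ι → ℕ} (hα : ∀ i, α i < h m / 2)
    (hβ : ∀ i, β i < h m / 2) (ht : ∀ i, t i < 3) (hu : ∀ i, u i < 3)
    (hni : ¬ ((∃ i j, u i ≠ u j) ∧ ((∀ i, u i ≤ 1) ∨ (∀ i, 1 ≤ u i)))) {j : ℤ}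
    (hj : ∀ i, ((α i + s m (t i) : ℕ) : ℤ) = ((β i + s m (u i) : ℕ) : ℤ) + j) :
    ∃ j' : ℤ, ∀ i, (α i : ℤ) = β i + j' := by
  obtain ⟨hh1, hh2⟩ := h_half m hm
  by_cases hall : ∀ i j, u i = u j
  · by_cases hne : Nonempty ι
    · obtain ⟨i₀⟩ := hne
      refine ⟨(α i₀ : ℤ) - β i₀, fun i => ?_⟩
      have e1 := hj i
      have e2 := hj i₀
      rw [hall i i₀] at e1
      have a1 := hα i
      have a2 := hα i₀
      have b1 := hβ i
      have b2 := hβ i₀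
      push_cast at e1 e2
      have : t i = t i₀ := s_gap (m := m) (ht i) (ht i₀) (by omega) (by omega)
      rw [this] at e1
      omega
    · exact ⟨0, fun i => absurd ⟨i⟩ hne⟩
  · push Not at hall hni
    obtain ⟨⟨a, ha⟩, ⟨b, hb⟩⟩ := hni hall
    have ha2 : u a = 2 := by have := hu a; omega
    have hb0 : u b = 0 := by omega
    have e1 := hj a
    have e2 := hj b
    rw [ha2, s_two] at e1
    rw [hb0, s_zero] at e2
    have a1 := hα a
    have a2 := hα b
    have b1 := hβ a
    have b2 := hβ b
    have hs : s m (t a) ≤ 2 * h m + 1 := by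
      have := ht a
      interval_cases t a <;> simp only [s_zero, s_one, s_two] <;> omega
    push_cast at e1 e2
    refine ⟨j, fun i => ?_⟩
    have e3 := hj i
    have a3 := hα i
    have b3 := hβ i
    push_cast at e3
    have : t i = u i := s_gap (m := m) (ht i) (hu i) (by omega) (by omega)
    rw [this] at e3
    omega

lemma same_diag {n : ℕ} (hn : 1 ≤ n) {x z : ι → ChaconX} (hx : x ∈ chaconCd ι n)
    (hz : z ∈ YY ι n) {a b : ℕ} (hab : (chaconTd ι)^[a] x = (chaconTd ι)^[b] z) :
    ∃ α β : ι → ℕ, (∀ i, α i < h n / 2) ∧ x ∈ Box n α ∧ z ∈ Box n β ∧ (∀ i, β i < h n / 2) ∧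
      ∃ j : ℤ, ∀ i, (α i : ℤ) = β i + j := by
  obtain ⟨N1, _, hN1⟩ := exists_unif x a
  obtain ⟨N2, _, hN2⟩ := exists_unif z b
  set N := max n (max N1 N2) with hN
  have hnN : n ≤ N := le_max_left _ _
  have key : ∀ d, d ≤ N - n → ∃ α β : ι → ℕ, (∀ i, α i < h (N - d) / 2) ∧ x ∈ Box (N - d) α ∧
      z ∈ Box (N - d) β ∧ (∀ i, β i < h (N - d) / 2) ∧ ∃ j : ℤ, ∀ i, (α i : ℤ) = β i + j := by
    intro d
    induction d with
    | zero =>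
      intro _
      choose α hα hxα using hN1 N ((le_max_left _ _).trans (le_max_right _ _))
      choose β hβ hzβ using hN2 N ((le_max_right _ _).trans (le_max_right _ _))
      refine ⟨α, β, fun i => by have := hα i; simp only [Nat.sub_zero]; omega, hxα, hzβ,
        fun i => by have := hβ i; simp only [Nat.sub_zero]; omega, (b : ℤ) - a, fun i => ?_⟩
      have h1 := hα i
      have h2 := hβ i
      have h3 := (Titer_mem (show α i + a < h N by omega)).mpr (hxα i)
      have h4 := (Titer_mem (show β i + b < h N by omega)).mpr (hzβ i)
      have h5 : chaconT^[a] (x i) = chaconT^[b] (z i) := by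
        rw [← Td_iter, ← Td_iter, hab]
      rw [h5] at h3
      have := lev_unique (by omega) (by omega) h3 h4
      omega
    | succ d ih =>
      intro hd
      obtain ⟨α', β', hα', hxα', hzβ', hβ', j, hj⟩ := ih (by omega)
      obtain ⟨m, hm⟩ : ∃ m, m = N - (d + 1) := ⟨_, rfl⟩
      rw [show N - d = m + 1 by omega] at hα' hxα' hzβ' hβ'
      rw [← hm]
      have hnm : n ≤ m := by omega
      choose α hα hxα using Cd_mono hnm hx
      choose β hβ hzβ using Cd_mono hnm hz.1
      refine ⟨α, β, hα, hxα, hzβ, hβ, ?_⟩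
      have hni := hz.2 m hnm
      refine descend (hn.trans hnm) hα hβ (t := fun i => dig m (x i)) (u := fun i => dig m (z i))
        (fun i => dig_lt _ _) (fun i => dig_lt _ _) ?_ (j := j) ?_
      · intro hcon
        apply hni
        obtain ⟨⟨i, i', hii⟩, h2⟩ := hcon
        exact ⟨⟨i, i', fun e => hii (congrArg Fin.val e)⟩, h2⟩
      · intro i
        have a1 := hα i
        have b1 := hβ i
        have a2 : α i < h m := by omega
        have b2 : β i < h m := by omega
        have h3 := lev_unique (idx_lt' _ a2) (by have := hα' i; omega) (lev_up a2 (hxα i)) (hxα' i)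
        have h4 := lev_unique (idx_lt' _ b2) (by have := hβ' i; omega) (lev_up b2 (hzβ i)) (hzβ' i)
        rw [h3, h4]
        exact hj i
  have := key (N - n) le_rfl
  rwa [show N - (N - n) = n by omega] at this

lemma diag_of_Om_null [Nonempty ι] {σ : Measure (ι → ChaconX)} (h0 : σ ≠ 0)
    (hb : BoundedlyFinite σ) (hinv : σ.map (chaconTd ι) = σ) (he : MeasErgodic σ (chaconTd ι))
    (hOm : σ (Om ι) = 0) : IsDiagonalMeasure ι σ := by
  refine ⟨hb, hinv, ?_⟩
  have hcov : univ ⊆ Om ι ∪ ⋃ n, YY ι n := by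
    intro x _
    by_cases hx : x ∈ Om ι
    · exact Or.inl hx
    · right
      simp only [Om, mem_ofPred_eq, not_forall, not_exists, not_and] at hx
      obtain ⟨N, hN⟩ := hx
      obtain ⟨M, hM⟩ := exists_Cd x
      exact mem_iUnion.mpr ⟨max N M, Cd_mono (le_max_right _ _) hM,
        fun m hm => hN m ((le_max_left _ _).trans hm)⟩
  obtain ⟨n₀, hn₀⟩ : ∃ n, σ (YY ι n) ≠ 0 := by
    by_contra hcon
    push Not at hcon
    apply h0
    rw [← Measure.measure_univ_eq_zero]
    exact measure_mono_null hcov (measure_union_null hOm (measure_iUnion_null hcon))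
  refine ⟨n₀ + 1, by omega, fun n hn => ?_⟩
  have hn1 : 1 ≤ n := by omega
  obtain ⟨hh1, hh2⟩ := h_half n hn1
  have hYn : σ (YY ι n) ≠ 0 := fun e => hn₀ (measure_mono_null (YY_mono (by omega)) e)
  obtain ⟨k, hk⟩ : ∃ k : ι → Fin (h n / 2), σ (YY ι n ∩ Box n (fun i => (k i : ℕ))) ≠ 0 := by
    by_contra hcon
    push Not at hcon
    apply hYn
    refine measure_mono_null ?_ (measure_iUnion_null hcon)
    intro x hx
    have := hx.1
    rw [Cd_eq, mem_iUnion] at this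
    obtain ⟨k, hk⟩ := this
    exact mem_iUnion.mpr ⟨k, hx, hk⟩
  set S := YY ι n ∩ Box n (fun i => (k i : ℕ)) with hS
  have hSm : MeasurableSet S := (measurableSet_YY n).inter (measurableSet_Box _ _)
  have hsat : σ (sat (chaconTd ι) S)ᶜ = 0 := by
    rcases he _ (measurableSet_sat emb_Td hSm) (sat_inv S) with h1 | h1
    · exact absurd (measure_mono_null (subset_sat S) h1) hk
    · exact h1
  obtain ⟨i₀, hi₀⟩ := Finite.exists_min (fun i => (k i : ℕ))
  obtain ⟨i₁, hi₁⟩ := Finite.exists_max (fun i => (k i : ℕ))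
  refine ⟨_, isNDiagonal_mk hn1 (q := fun i => (k i : ℕ) - k i₀) (M := (k i₁ : ℕ) - k i₀)
    (fun i => by have := hi₁ i; omega) i₀ i₁ (by simp) rfl (by have := (k i₁).2; omega), ?_⟩
  refine measure_mono_null ?_ hsat
  rintro x ⟨hxC, hxD⟩ ⟨a, b, z, hz, hab⟩
  apply hxD
  obtain ⟨α, β, hα, hxα, hzβ, hβ, j, hj⟩ := same_diag hn1 hxC hz.1 hab
  have hβk : ∀ i, β i = k i := fun i =>
    lev_unique (by have := hβ i; omega) (by have := (k i).2; omega) (hzβ i) (hz.2 i)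
  simp only [mem_iUnion, Finset.mem_range]
  have g0 := hj i₀
  have g1 := hj i₁
  rw [hβk] at g0 g1
  have a1 := hα i₁
  have k1 := hi₁ i₀
  have k2 := (k i₁).2
  refine ⟨α i₀, by omega, fun i => ?_⟩
  have g2 := hj i
  rw [hβk] at g2
  have := hi₀ i
  have e : (k i : ℕ) - k i₀ + α i₀ = α i := by omega
  change x i ∈ lev n ((k i : ℕ) - k i₀ + α i₀)
  rw [e]
  exact hxα i

end diag

end Chacon
end


set_option linter.unusedSectionVars false
noncomputable section

namespace Chacon

section decomp

/-- the standing hypotheses on the measure -/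
def Std (ι : Type) [Fintype ι] (σ : Measure (ι → ChaconX)) : Prop :=
  σ ≠ 0 ∧ BoundedlyFinite σ ∧ σ.map (chaconTd ι) = σ ∧ MeasErgodic σ (chaconTd ι)

/-- the decomposition property for a family of index predicates -/
def Decomp {d : ℕ} (Q : Fin d → Prop) (σ : Measure ({i // Q i} → ChaconX)) (κ : Type)
    [Fintype κ] (p : κ → Fin d → Prop) (M : ∀ j, Measure ({i // p j i} → ChaconX)) : Prop :=
  (∀ j, ∃ i, p j i) ∧ (∀ i j j', p j i → p j' i → j = j') ∧ (∀ i, Q i ↔ ∃ j, p j i) ∧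
    (∀ j, IsDiagonalMeasure {i // p j i} (M j)) ∧
    ∀ A : Fin d → Set ChaconX, (∀ i, MeasurableSet (A i)) →
      σ (Set.univ.pi fun i => A i.1) = ∏ j, M j (Set.univ.pi fun i => A i.1)

lemma measurableSet_pi' {ι : Type} [Fintype ι] {A : ι → Set ChaconX} (hA : ∀ i, MeasurableSet (A i)) :
    MeasurableSet (Set.univ.pi A) := MeasurableSet.univ_pi hA

lemma decomp {d : ℕ} (N : ℕ) : ∀ (Q : Fin d → Prop) (σ : Measure ({i // Q i} → ChaconX)),
    Nat.card {i // Q i} ≤ N → Nonempty {i // Q i} → Std {i // Q i} σ →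
    ∃ (κ : Type) (_ : Fintype κ) (p : κ → Fin d → Prop)
      (M : ∀ j, Measure ({i // p j i} → ChaconX)), Decomp Q σ κ p M := by
  induction N with
  | zero =>
    intro Q σ hc hne _
    exact absurd (Nat.card_pos (α := {i // Q i})) (by omega)
  | succ N ih =>
    intro Q σ hc hne hstd
    obtain ⟨h0, hb, hinv, he⟩ := hstd
    by_cases hOm : σ (Om {i // Q i}) = 0
    · refine ⟨Unit, inferInstance, fun _ => Q, fun _ => σ, ?_, ?_, ?_, ?_, ?_⟩
      · intro _; obtain ⟨i⟩ := hne; exact ⟨i.1, i.2⟩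
      · intro _ _ _ _ _; rfl
      · intro i; exact ⟨fun hi => ⟨(), hi⟩, fun ⟨_, hi⟩ => hi⟩
      · intro _; exact diag_of_Om_null h0 hb hinv he hOm
      · intro A _; simp
    · obtain ⟨E, ⟨e1, he1⟩, ⟨e2, he2⟩, hE, hE'⟩ := exists_split h0 hb hinv he hOm
      set Q1 : Fin d → Prop := fun i => ∃ hq : Q i, (⟨i, hq⟩ : {i // Q i}) ∈ E with hQ1
      set Q2 : Fin d → Prop := fun i => ∃ hq : Q i, (⟨i, hq⟩ : {i // Q i}) ∉ E with hQ2
      set a : {i // Q1 i} → {i // Q i} := fun i => ⟨i.1, i.2.choose⟩ with ha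
      set b : {i // Q2 i} → {i // Q i} := fun i => ⟨i.1, i.2.choose⟩ with hbdef
      have hra : range a = E := by
        ext x
        constructor
        · rintro ⟨i, rfl⟩; exact i.2.choose_spec
        · intro hx; exact ⟨⟨x.1, x.2, hx⟩, rfl⟩
      have hrb : range b = Eᶜ := by
        ext x
        constructor
        · rintro ⟨i, rfl⟩; exact i.2.choose_spec
        · intro hx; exact ⟨⟨x.1, x.2, hx⟩, rfl⟩
      have hab : range b = (range a)ᶜ := by rw [hra, hrb]
      obtain ⟨σ₁, σ₂, hs1, hs2, hprod⟩ := split_product h0 hb he hab (by rw [hra]; exact hE)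
        (by rw [hrb]; exact hE')
      have hainj : Function.Injective a := fun i j hij => 
        Subtype.ext (show i.1 = j.1 from congrArg (fun z : {i // Q i} => z.1) hij)
      have hbinj : Function.Injective b := fun i j hij => 
        Subtype.ext (show i.1 = j.1 from congrArg (fun z : {i // Q i} => z.1) hij)
      have hc1 : Nat.card {i // Q1 i} < Nat.card {i // Q i} := by
        rw [Nat.card_eq_fintype_card, Nat.card_eq_fintype_card]
        apply Fintype.card_lt_of_injective_not_surjective a hainj
        intro hs
        have : e2 ∈ range a := hs e2
        rw [hra] at this; exact he2 this
      have hc2 : Nat.card {i // Q2 i} < Nat.card {i // Q i} := by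
        rw [Nat.card_eq_fintype_card, Nat.card_eq_fintype_card]
        apply Fintype.card_lt_of_injective_not_surjective b hbinj
        intro hs
        have : e1 ∈ range b := hs e1
        rw [hrb] at this; exact this he1
      obtain ⟨κ₁, _, p₁, M₁, hp1, hd1, hq1, hD1, hP1⟩ := ih Q1 σ₁ (by omega)
        ⟨⟨e1.1, e1.2, he1⟩⟩ hs1
      obtain ⟨κ₂, _, p₂, M₂, hp2, hd2, hq2, hD2, hP2⟩ := ih Q2 σ₂ (by omega)
        ⟨⟨e2.1, e2.2, he2⟩⟩ hs2
      have hdis : ∀ i, Q1 i → Q2 i → False := fun i ⟨_, h1⟩ ⟨_, h2⟩ => h2 h1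
      refine ⟨κ₁ ⊕ κ₂, inferInstance, Sum.elim p₁ p₂,
        fun j => match j with
          | Sum.inl j => M₁ j
          | Sum.inr j => M₂ j, ?_, ?_, ?_, ?_, ?_⟩
      · rintro (j | j)
        · exact hp1 j
        · exact hp2 j
      · rintro i (j | j) (j' | j') h1 h2
        · rw [hd1 i j j' h1 h2]
        · exact (hdis i ((hq1 i).mpr ⟨j, h1⟩) ((hq2 i).mpr ⟨j', h2⟩)).elim
        · exact (hdis i ((hq1 i).mpr ⟨j', h2⟩) ((hq2 i).mpr ⟨j, h1⟩)).elim
        · rw [hd2 i j j' h1 h2]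
      · intro i
        constructor
        · intro hi
          by_cases hiE : (⟨i, hi⟩ : {i // Q i}) ∈ E
          · obtain ⟨j, hj⟩ := (hq1 i).mp ⟨hi, hiE⟩
            exact ⟨Sum.inl j, hj⟩
          · obtain ⟨j, hj⟩ := (hq2 i).mp ⟨hi, hiE⟩
            exact ⟨Sum.inr j, hj⟩
        · rintro ⟨j | j, hj⟩
          · exact ((hq1 i).mpr ⟨j, hj⟩).choose
          · exact ((hq2 i).mpr ⟨j, hj⟩).choose
      · rintro (j | j)
        · exact hD1 j
        · exact hD2 j
      · intro A hA
        rw [Fintype.prod_sum_type]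
        have hset : (Set.univ.pi fun i : {i // Q i} => A i.1) =
            rr a ⁻¹' (Set.univ.pi fun i => A i.1) ∩ rr b ⁻¹' (Set.univ.pi fun i => A i.1) := by
          ext x
          simp only [Set.mem_pi, mem_univ, forall_true_left, mem_inter_iff, mem_preimage, rr]
          constructor
          · intro hx
            exact ⟨fun i => hx (a i), fun i => hx (b i)⟩
          · rintro ⟨h1, h2⟩ i
            by_cases hi : i ∈ E
            · exact h1 ⟨i.1, i.2, hi⟩
            · exact h2 ⟨i.1, i.2, hi⟩
        rw [hset, hprod _ _ (measurableSet_pi' fun i => hA i.1) (measurableSet_pi' fun i => hA i.1),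
          hP1 A hA, hP2 A hA]
        rfl

lemma decomp_main {d : ℕ} (hd : 1 ≤ d) {σ : Measure (Fin d → ChaconX)} (hstd : Std (Fin d) σ) :
    ∃ (r : ℕ) (P : Fin d → Fin r)
        (σs : ∀ j : Fin r, Measure ({i : Fin d // P i = j} → ChaconX)),
      Function.Surjective P ∧
      (∀ j : Fin r, IsDiagonalMeasure {i : Fin d // P i = j} (σs j)) ∧
      ∀ A : Fin d → Set ChaconX, (∀ i, MeasurableSet (A i)) →
        σ (Set.univ.pi A) = ∏ j : Fin r, σs j (Set.univ.pi fun i => A i.1) := by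
  obtain ⟨h0, hb, hinv, he⟩ := hstd
  set a : {i : Fin d // True} → Fin d := Subtype.val with ha
  have hra : range a = univ := by ext x; simp [ha]
  have hTE : TE (range a) = chaconTd (Fin d) := by
    funext x i; simp [TE, hra, chaconTd]
  have hstd' : Std {i : Fin d // (fun _ : Fin d => True) i} (mg σ a univ) := by
    refine ⟨?_, ?_, ?_, ?_⟩
    · intro hz
      apply h0
      rw [← Measure.measure_univ_eq_zero]
      have := mg_apply σ a univ MeasurableSet.univ
      rw [hz, inter_univ, preimage_univ] at this
      exact this.symm
    · rw [bf_iff]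
      intro m
      rw [mg_apply _ _ _ (measurableSet_Cd m)]
      refine (measure_mono ?_).trans_lt ((bf_iff σ).mp hb m)
      rintro x ⟨hx, _⟩ i
      exact hx ⟨i, trivial⟩
    · exact mg_inv (by rw [hTE]; exact hinv) preimage_univ
    · exact mg_erg he _
  obtain ⟨κ, _, p, M, hp, hdj, hq, hD, hP⟩ := decomp (Nat.card {i : Fin d // True})
    (fun _ : Fin d => True) (mg σ a univ) le_rfl ⟨⟨⟨0, hd⟩, trivial⟩⟩ (by convert hstd')
  · set e := Fintype.equivFin κ with hedef
    obtain ⟨P, hPp⟩ : ∃ P : Fin d → Fin (Fintype.card κ), ∀ j i, p (e.symm j) i ↔ P i = j := by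
      choose P0 hP0 using fun i => (hq i).mp trivial
      refine ⟨fun i => e (P0 i), fun j i => ?_⟩
      rw [← Equiv.eq_symm_apply]
      exact ⟨fun h1 => hdj i _ _ (hP0 i) h1, fun h1 => h1 ▸ hP0 i⟩
    have key : ∃ (p' : Fin (Fintype.card κ) → Fin d → Prop)
        (M' : ∀ j, Measure ({i // p' j i} → ChaconX)), (∀ j i, p' j i ↔ P i = j) ∧ (∀ j, ∃ i, p' j i) ∧
        (∀ j, IsDiagonalMeasure {i // p' j i} (M' j)) ∧
        ∀ A : Fin d → Set ChaconX, (∀ i, MeasurableSet (A i)) →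
        σ (Set.univ.pi A) = ∏ j, M' j (Set.univ.pi fun i => A i.1) := by
      refine ⟨fun j => p (e.symm j), fun j => M (e.symm j), hPp, fun j => hp _, fun j => hD _, ?_⟩
      intro A hA
      have h1 := hP A hA
      have h3 := mg_apply σ a univ (H := Set.univ.pi fun i : {i : Fin d // True} => A i.1)
        (measurableSet_pi' fun i => hA i.1)
      rw [inter_univ] at h3
      replace h1 := h3.symm.trans h1
      have h2 : rr a ⁻¹' (Set.univ.pi fun i : {i : Fin d // True} => A i.1) = Set.univ.pi A := by
        ext x
        simp [rr, ha, Set.mem_pi]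
      rw [h2] at h1
      rw [h1]
      exact (Equiv.prod_comp e.symm (fun k => M k (Set.univ.pi fun i => A i.1))).symm
    obtain ⟨p', M', h1, h2, h3, h4⟩ := key
    have hp' : p' = fun j i => P i = j := by
      funext j i; exact propext (h1 j i)
    subst hp'
    refine ⟨_, P, M', h2, ?_, h4⟩
    intro j
    convert h3 j

end decomp

end Chacon
end


set_option linter.unusedSectionVars false
noncomputable section

namespace Chacon

section diss
variable {ι : Type} [Fintype ι]

lemma T_Tinv_iter (k : ℕ) {w : ChaconX} (hw : chaconTinv^[k] w ≠ z0) :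
    chaconT^[k] (chaconTinv^[k] w) = w := by
  induction k with
  | zero => rfl
  | succ k ih =>
    rw [Function.iterate_succ_apply' chaconTinv] at hw ⊢
    have hu : chaconTinv^[k] w ≠ z0 := by
      intro he; rw [he, Tinv_z0] at hw; exact hw rfl
    obtain ⟨z, hz⟩ := surj_of_ne hu
    rw [← hz, Tinv_T, Function.iterate_succ_apply, hz]
    exact ih hu

lemma TdZ_nat (j : ℕ) : chaconTdZ ι (j : ℤ) = (chaconTd ι)^[j] := by
  funext x i
  rw [Td_iter, ← TZ_nat]; rfl

lemma wand_eq {W : Set (ι → ChaconX)} (hW : ZWandering (chaconTdZ ι) W) {y₁ y₂ : ι → ChaconX}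
    (h1 : y₁ ∈ W) (h2 : y₂ ∈ W) {m n : ℕ} (he : (chaconTd ι)^[m] y₁ = (chaconTd ι)^[n] y₂) :
    y₁ = y₂ := by
  by_cases hmn : m = n
  · subst hmn
    exact (emb_iter emb_Td m).injective he
  · have hd := hW (m : ℤ) (n : ℤ) (by exact_mod_cast hmn)
    rw [TdZ_nat, TdZ_nat] at hd
    exact (Set.disjoint_left.mp hd ⟨y₁, h1, rfl⟩ ⟨y₂, h2, he.symm⟩).elim

lemma sat_disj {W S₁ S₂ : Set (ι → ChaconX)} (hW : ZWandering (chaconTdZ ι) W)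
    (h1 : S₁ ⊆ W) (h2 : S₂ ⊆ W) (hd : Disjoint S₁ S₂) : S₂ ⊆ (sat (chaconTd ι) S₁)ᶜ := by
  rintro z hz ⟨a, b, y, hy, e⟩
  have := wand_eq hW (h2 hz) (h1 hy) e
  subst this
  exact Set.disjoint_left.mp hd hy hz

lemma iUnion_sub (W : Set (ι → ChaconX)) :
    (⋃ j : ℤ, chaconTdZ ι j '' W) ⊆ sat (chaconTd ι) W ∪ (NZ ι)ᶜ := by
  intro y hy
  obtain ⟨j, w, hw, rfl⟩ := mem_iUnion.mp hy
  obtain ⟨k, rfl | rfl⟩ := j.eq_nat_or_neg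
  · left; exact ⟨0, k, w, hw, by rw [TdZ_nat]; rfl⟩
  · by_cases hn : chaconTdZ ι (-(k : ℤ)) w ∈ NZ ι
    · left
      refine ⟨k, 0, w, hw, ?_⟩
      funext i
      rw [Td_iter]
      have := hn i
      simp only [chaconTdZ, TZ_neg] at this ⊢
      exact T_Tinv_iter k this
    · right; exact hn

lemma exists_atom {σ : Measure (ι → ChaconX)} (h0 : σ ≠ 0)
    (hinv : σ.map (chaconTd ι) = σ) (he : MeasErgodic σ (chaconTd ι))
    (hdis : ZTotallyDissipative σ (chaconTdZ ι)) : ∃ x, σ {x} ≠ 0 := by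
  obtain ⟨W, hWm, hW, hcov⟩ := hdis
  have hWpos : σ W ≠ 0 := by
    intro hz
    apply h0
    rw [← Measure.measure_univ_eq_zero]
    have hu : (univ : Set (ι → ChaconX)) ⊆ (⋃ j : ℤ, chaconTdZ ι j '' W)ᶜ ∪
        (sat (chaconTd ι) W ∪ (NZ ι)ᶜ) := by
      intro y _
      by_cases hy : y ∈ ⋃ j : ℤ, chaconTdZ ι j '' W
      · right; exact iUnion_sub W hy
      · left; exact hy
    exact measure_mono_null hu (measure_union_null hcov
      (measure_union_null (sat_null emb_Td hinv hz) (NZ_conull hinv)))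
  have h01 : ∀ S, MeasurableSet S → S ∈ ae (σ.restrict W) ∨ Sᶜ ∈ ae (σ.restrict W) := by
    intro S hS
    have hd : Disjoint (W ∩ S) (W ∩ Sᶜ) :=
      Set.disjoint_left.mpr fun x h1 h2 => h2.2 h1.2
    rcases he _ (measurableSet_sat emb_Td (hWm.inter hS)) (sat_inv (f := chaconTd ι) (W ∩ S)) with h1 | h1
    · right
      rw [mem_ae_iff, compl_compl, Measure.restrict_apply hS, inter_comm]
      exact measure_mono_null (subset_sat _) h1
    · left
      rw [mem_ae_iff, Measure.restrict_apply hS.compl, inter_comm]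
      exact measure_mono_null (sat_disj hW inter_subset_left inter_subset_left hd) h1
  have : Nonempty (ι → ChaconX) := ⟨fun _ => z0⟩
  obtain ⟨x, hx⟩ := Filter.exists_singleton_mem_of_mem_of_forall_separating
    (l := ae (σ.restrict W)) MeasurableSet (s := univ) Filter.univ_mem h01
  refine ⟨x, fun hz => hWpos ?_⟩
  rw [mem_ae_iff, Measure.restrict_apply (measurableSet_singleton x).compl] at hx
  refine measure_mono_null (t := ({x}ᶜ ∩ W) ∪ {x}) ?_ (measure_union_null hx hz)
  intro y hy
  by_cases hyx : y = x
  · right; exact hyx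
  · left; exact ⟨hyx, hy⟩

lemma orbit_conull {σ : Measure (ι → ChaconX)} (he : MeasErgodic σ (chaconTd ι)) {x : ι → ChaconX}
    (hx : σ {x} ≠ 0) : σ ((sat (chaconTd ι) {x})ᶜ) = 0 := by
  rcases he _ (measurableSet_sat emb_Td (measurableSet_singleton x))
    (sat_inv (f := chaconTd ι) {x}) with h1 | h1
  · exact absurd (measure_mono_null (subset_sat _) h1) hx
  · exact h1

lemma sat_sub_orbit (x : ι → ChaconX) :
    sat (chaconTd ι) {x} ⊆ range fun j : ℤ => chaconTdZ ι j x := by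
  rintro y ⟨a, b, _, rfl, e⟩
  rename_i x
  rcases le_total a b with hab | hab
  · obtain ⟨c, rfl⟩ := Nat.exists_eq_add_of_le hab
    rw [Function.iterate_add_apply] at e
    have := (emb_iter emb_Td a).injective e
    exact ⟨(c : ℤ), by rw [this]; exact congrFun (TdZ_nat c) _⟩
  · obtain ⟨c, rfl⟩ := Nat.exists_eq_add_of_le hab
    rw [Function.iterate_add_apply] at e
    have := (emb_iter emb_Td b).injective e
    refine ⟨-(c : ℤ), ?_⟩
    funext i
    simp only [chaconTdZ, TZ_neg]
    rw [← this, Td_iter, Tinv_iter]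

lemma Td_iter_inj [Nonempty ι] (y : ι → ChaconX) :
    Function.Injective fun j : ℕ => (chaconTd ι)^[j] y := by
  have key : ∀ a c : ℕ, (chaconTd ι)^[a] y = (chaconTd ι)^[a + c] y → c = 0 := by
    intro a c e
    rw [Function.iterate_add_apply] at e
    have := (emb_iter emb_Td a).injective e
    by_contra hc
    obtain ⟨i⟩ := ‹Nonempty ι›
    have h2 := congrFun this i
    rw [Td_iter] at h2
    exact T_aperiodic (Nat.pos_of_ne_zero hc) _ h2.symm
  intro a b e
  rcases le_total a b with hab | hab
  · obtain ⟨c, rfl⟩ := Nat.exists_eq_add_of_le hab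
    rw [key a c e]; rfl
  · obtain ⟨c, rfl⟩ := Nat.exists_eq_add_of_le hab
    rw [key b c e.symm]; rfl

lemma inf_atoms {σ : Measure (ι → ChaconX)} {S A : Set (ι → ChaconX)} (hS : S.Infinite) (hSA : S ⊆ A)
    {c : ℝ≥0∞} (hc : c ≠ 0) (hm : ∀ y ∈ S, σ {y} = c) : σ A = ⊤ := by
  refine top_unique (le_trans ?_ (measure_mono hSA))
  exact (hS.meas_eq_top ⟨c, hc, fun y hy => (hm y hy).ge⟩).ge

lemma Om_null [Nonempty ι] {σ : Measure (ι → ChaconX)} (hb : BoundedlyFinite σ)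
    (hinv : σ.map (chaconTd ι) = σ) {x : ι → ChaconX}
    (hx : σ {x} ≠ 0) (horb : σ ((sat (chaconTd ι) {x})ᶜ) = 0) : σ (Om ι) = 0 := by
  by_contra hO
  obtain ⟨y, hyO, hyN, hys⟩ : ∃ y, y ∈ Om ι ∧ y ∈ NZ ι ∧ y ∈ sat (chaconTd ι) {x} := by
    by_contra hne
    push Not at hne
    apply hO
    refine measure_mono_null (t := (NZ ι)ᶜ ∪ (sat (chaconTd ι) {x})ᶜ) ?_
      (measure_union_null (NZ_conull hinv) horb)
    intro y hy
    by_cases hyN : y ∈ NZ ι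
    · right; exact hne y hy hyN
    · left; exact hyN
  have him : ∀ (j : ℕ) (z : ι → ChaconX), σ {(chaconTd ι)^[j] z} = σ {z} := by
    intro j z
    rw [← image_singleton, meas_image_iter emb_Td hinv]
  have hy : σ {y} ≠ 0 := by
    obtain ⟨a, b, _, rfl, e⟩ := hys
    rename_i x
    rw [← him a y, e, him b]; exact hx
  obtain ⟨n, -, hinf | hinf⟩ := visits hyO hyN
  · have hS := hinf.image (f := fun j : ℕ => (chaconTd ι)^[j] y) (Td_iter_inj y).injOn
    have := inf_atoms (σ := σ) hS (A := chaconCd ι n)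
      (by rintro _ ⟨j, hj, rfl⟩; exact hj) hy (by rintro _ ⟨j, _, rfl⟩; exact him j y)
    exact absurd this ((bf_iff σ).mp hb n).ne
  · have hch : ∀ j : ℕ, ∃ z, y ∈ (chaconTd ι)^[j] '' chaconCd ι n →
        z ∈ chaconCd ι n ∧ (chaconTd ι)^[j] z = y := by
      intro j
      by_cases hj : y ∈ (chaconTd ι)^[j] '' chaconCd ι n
      · obtain ⟨z, hz⟩ := hj; exact ⟨z, fun _ => hz⟩
      · exact ⟨y, fun h1 => absurd h1 hj⟩
    choose g hg using hch
    have hinj : InjOn g {j : ℕ | y ∈ (chaconTd ι)^[j] '' chaconCd ι n} := by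
      intro j hj k hk hjk
      have h1 := (hg j hj).2
      have h2 := (hg k hk).2
      rw [hjk, ← h2] at h1
      exact Td_iter_inj (g k) h1
    have hS := hinf.image hinj
    have := inf_atoms (σ := σ) hS (A := chaconCd ι n)
      (by rintro _ ⟨j, hj, rfl⟩; exact (hg j hj).1) hy
      (by rintro _ ⟨j, hj, rfl⟩; rw [← him j (g j), (hg j hj).2])
    exact absurd this ((bf_iff σ).mp hb n).ne

lemma diss_main [Nonempty ι] {σ : Measure (ι → ChaconX)} (hstd : Std ι σ)
    (hdis : ZTotallyDissipative σ (chaconTdZ ι)) :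
    IsDiagonalMeasure ι σ ∧
      ∃ x : ι → ChaconX, σ ((Set.range fun j : ℤ => chaconTdZ ι j x)ᶜ) = 0 := by
  obtain ⟨h0, hb, hinv, he⟩ := hstd
  obtain ⟨x, hx⟩ := exists_atom h0 hinv he hdis
  have horb := orbit_conull he hx
  exact ⟨diag_of_Om_null h0 hb hinv he (Om_null hb hinv hx horb), x,
    measure_mono_null (compl_subset_compl.mpr (sat_sub_orbit x)) horb⟩

end diss

end Chacon
end

/-- **Theorem (structure of ergodic invariant measures).**
Let `d ≥ 1` and let `σ` be a nonzero, `T^{×d}`-invariant, boundedly finite measure on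
`X^d` such that `(X^d, σ, T^{×d})` is ergodic.  Then there is a partition of `{1,…,d}`
into subsets `I₁, …, I_r` such that `σ = σ^{I₁} ⊗ ⋯ ⊗ σ^{I_r}`, where each `σ^{I_j}` is a
diagonal measure on `X^{I_j}`.  If moreover the system is totally dissipative, `σ` is a
diagonal measure supported on a single `T^{×d}`-orbit. -/
theorem chacon_msj (d : ℕ) (hd : 1 ≤ d) (σ : Measure (Fin d → ChaconX)) (hσ : σ ≠ 0)
    (hbf : BoundedlyFinite σ) (hinv : σ.map (chaconTd (Fin d)) = σ)
    (herg : MeasErgodic σ (chaconTd (Fin d))) :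
    (∃ (r : ℕ) (P : Fin d → Fin r)
        (σs : ∀ j : Fin r, Measure ({i : Fin d // P i = j} → ChaconX)),
      Function.Surjective P ∧
      (∀ j : Fin r, IsDiagonalMeasure {i : Fin d // P i = j} (σs j)) ∧
      ∀ A : Fin d → Set ChaconX, (∀ i, MeasurableSet (A i)) →
        σ (Set.univ.pi A) = ∏ j : Fin r, σs j (Set.univ.pi fun i => A i.1)) ∧
    (ZTotallyDissipative σ (chaconTdZ (Fin d)) →
      IsDiagonalMeasure (Fin d) σ ∧
        ∃ x : Fin d → ChaconX,
          σ ((Set.range fun j : ℤ => chaconTdZ (Fin d) j x)ᶜ) = 0) := by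
  have hstd : Chacon.Std (Fin d) σ := ⟨hσ, hbf, hinv, herg⟩
  have : Nonempty (Fin d) := ⟨⟨0, hd⟩⟩
  exact ⟨Chacon.decomp_main hd hstd, fun hdis => Chacon.diss_main hstd hdis⟩
end

section
/- The Lebesgue measure μ is, up to a multiplicative constant, the only T-invariant, boundedly finite measure on X: every T-invariant boundedly finite measure on X = ℝ₊ is equal to c·μ for some constant c ≥ 0. -/
open MeasureTheory Set
open scoped ENNReal NNReal Classical

/-- Integer position of level `k` of tower `n`. -/
def chP : ℕ → ℕ → ℕ
  | 0, _ => 0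
  | n + 1, k =>
      if k < chaconH n then 3 * chP n k
      else if k < 2 * chaconH n then 3 * chP n (k - chaconH n) + 1
      else if k = 2 * chaconH n then 3 * chaconH n
      else if k ≤ 3 * chaconH n then 3 * chP n (k - 2 * chaconH n - 1) + 2
      else k

lemma chaconL_eq (n k : ℕ) : chaconL n k = (chP n k : ℝ) * (3 : ℝ)⁻¹ ^ n := by
  induction n generalizing k with
  | zero => simp [chaconL, chP]
  | succ n ih =>
    simp only [chaconL, chP]
    split_ifs <;> (try simp only [ih]) <;> push_cast <;> ring

lemma chH_succ (n : ℕ) : chaconH (n + 1) = 6 * chaconH n + 2 := by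
  simp only [chaconH]; ring

lemma chH_pos (n : ℕ) : 0 < chaconH n := by
  cases n with
  | zero => simp [chaconH]
  | succ n => rw [chH_succ]; omega

lemma chP_lt (n k : ℕ) (hk : k < chaconH n) : chP n k < chaconH n := by
  induction n generalizing k with
  | zero => simp [chP, chaconH]
  | succ n ih =>
    rw [chH_succ] at hk ⊢
    simp only [chP]
    split_ifs with h1 h2 h3 h4
    · have := ih k h1; omega
    · have := ih (k - chaconH n) (by omega); omega
    · omega
    · have := ih (k - 2 * chaconH n - 1) (by omega); omega
    · omega

lemma chP_inj (n k l : ℕ) (hk : k < chaconH n) (hl : l < chaconH n) (h : chP n k = chP n l) :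
    k = l := by
  induction n generalizing k l with
  | zero => simp [chaconH] at hk hl; omega
  | succ n ih =>
    rw [chH_succ] at hk hl
    simp only [chP] at h
    have key : ∀ a b, a < chaconH n → b < chaconH n → chP n a = chP n b → a = b :=
      fun a b ha hb hab => ih a b ha hb hab
    split_ifs at h with h1 h2 h3 h4 h5 h6 h7 h8 h9 h10 h11 h12 h13 h14 h15 h16 h17 h18 h19 h20
      h21 h22 h23 h24
    all_goals try omega
    all_goals first
      | (have := chP_lt n k (by omega); omega)
      | (have := chP_lt n l (by omega); omega)
      | (have := chP_lt n (k - chaconH n) (by omega); omega)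
      | (have := chP_lt n (l - chaconH n) (by omega); omega)
      | (have := chP_lt n (k - 2 * chaconH n - 1) (by omega); omega)
      | (have := chP_lt n (l - 2 * chaconH n - 1) (by omega); omega)
      | (have := key k l (by omega) (by omega) (by omega); omega)
      | (have := key (k - chaconH n) (l - chaconH n) (by omega) (by omega) (by omega); omega)
      | (have := key (k - 2 * chaconH n - 1) (l - 2 * chaconH n - 1) (by omega) (by omega)
          (by omega); omega)

lemma chP_surj (n j : ℕ) (hj : j < chaconH n) : ∃ k, k < chaconH n ∧ chP n k = j := by
  have h := Finset.surjOn_of_injOn_of_card_le (s := Finset.range (chaconH n))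
    (t := Finset.range (chaconH n)) (chP n)
    (fun k hk => by simpa using chP_lt n k (by simpa using hk))
    (fun k hk l hl hkl => chP_inj n k l (by simpa using hk) (by simpa using hl) hkl) le_rfl
  obtain ⟨k, hk, hkj⟩ := h (show j ∈ (Finset.range (chaconH n) : Set ℕ) by simpa using hj)
  exact ⟨k, by simpa using hk, hkj⟩

lemma mem_lev (n k : ℕ) (x : ℝ) : x ∈ chaconLevel n k ↔
    (chP n k : ℝ) * (3 : ℝ)⁻¹ ^ n ≤ x ∧ x < ((chP n k : ℝ) + 1) * (3 : ℝ)⁻¹ ^ n := by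
  rw [chaconLevel, chaconL_eq, mem_Ico]
  constructor <;> rintro ⟨h1, h2⟩ <;> exact ⟨h1, by linarith⟩

lemma lev_uniq (n k l : ℕ) (x : ℝ) (hk : k < chaconH n) (hl : l < chaconH n)
    (h1 : x ∈ chaconLevel n k) (h2 : x ∈ chaconLevel n l) : k = l := by
  apply chP_inj n k l hk hl
  rw [mem_lev] at h1 h2
  have hp : (0 : ℝ) < (3 : ℝ)⁻¹ ^ n := by positivity
  have a := lt_of_mul_lt_mul_right (h1.1.trans_lt h2.2) hp.le
  have b := lt_of_mul_lt_mul_right (h2.1.trans_lt h1.2) hp.le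
  norm_cast at a b
  omega

lemma chP_0 (n k : ℕ) (hk : k < chaconH n) : chP (n + 1) k = 3 * chP n k := by
  simp [chP, hk]

lemma chP_1 (n k : ℕ) (hk : k < chaconH n) : chP (n + 1) (k + chaconH n) = 3 * chP n k + 1 := by
  simp only [chP]
  rw [if_neg (by omega), if_pos (by omega), Nat.add_sub_cancel]

lemma chP_2 (n k : ℕ) (hk : k < chaconH n) :
    chP (n + 1) (k + (2 * chaconH n + 1)) = 3 * chP n k + 2 := by
  simp only [chP]
  rw [if_neg (by omega), if_neg (by omega), if_neg (by omega), if_pos (by omega)]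
  congr 3
  omega

/-- Splitting a level in three. -/
lemma lev_split (n k : ℕ) (x : ℝ) (hk : k < chaconH n) : x ∈ chaconLevel n k ↔
    x ∈ chaconLevel (n + 1) k ∨ x ∈ chaconLevel (n + 1) (k + chaconH n) ∨
      x ∈ chaconLevel (n + 1) (k + (2 * chaconH n + 1)) := by
  simp only [mem_lev, chP_0 n k hk, chP_1 n k hk, chP_2 n k hk]
  push_cast
  have e : (3 : ℝ)⁻¹ ^ n = 3 * (3 : ℝ)⁻¹ ^ (n + 1) := by rw [pow_succ]; ring
  rw [e]
  have hp : (0 : ℝ) < (3 : ℝ)⁻¹ ^ (n + 1) := by positivity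
  generalize (3 : ℝ)⁻¹ ^ (n + 1) = t at *
  constructor
  · rintro ⟨h1, h2⟩
    rcases lt_or_ge x ((3 * (chP n k : ℝ) + 1) * t) with h | h
    · left; constructor <;> linarith
    · rcases lt_or_ge x ((3 * (chP n k : ℝ) + 2) * t) with h' | h'
      · right; left; constructor <;> linarith
      · right; right; constructor <;> linarith
  · rintro (⟨h1, h2⟩ | ⟨h1, h2⟩ | ⟨h1, h2⟩) <;> constructor <;> linarith

lemma lev_up1 (n k : ℕ) (x : ℝ) (hk : k + 1 < chaconH n) (hx : x ∈ chaconLevel n k) :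
    ∃ l, l + 1 < chaconH (n + 1) ∧ x ∈ chaconLevel (n + 1) l ∧
      chaconL (n + 1) (l + 1) - chaconL (n + 1) l = chaconL n (k + 1) - chaconL n k := by
  have hk' : k < chaconH n := by omega
  have hs := chH_succ n
  rcases (lev_split n k x hk').1 hx with h | h | h
  · refine ⟨k, by omega, h, ?_⟩
    simp only [chaconL_eq]
    rw [chP_0 n k hk', chP_0 n (k + 1) hk, pow_succ]
    push_cast; ring
  · refine ⟨_, by omega, h, ?_⟩
    simp only [chaconL_eq]
    rw [show k + chaconH n + 1 = (k + 1) + chaconH n by ring,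
      chP_1 n k hk', chP_1 n (k + 1) hk, pow_succ]
    push_cast; ring
  · refine ⟨_, by omega, h, ?_⟩
    simp only [chaconL_eq]
    rw [show k + (2 * chaconH n + 1) + 1 = (k + 1) + (2 * chaconH n + 1) by ring,
      chP_2 n k hk', chP_2 n (k + 1) hk, pow_succ]
    push_cast; ring

lemma lev_up (n m k : ℕ) (x : ℝ) (hnm : n ≤ m) (hk : k + 1 < chaconH n)
    (hx : x ∈ chaconLevel n k) :
    ∃ l, l + 1 < chaconH m ∧ x ∈ chaconLevel m l ∧
      chaconL m (l + 1) - chaconL m l = chaconL n (k + 1) - chaconL n k := by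
  induction m, hnm using Nat.le_induction with
  | base => exact ⟨k, hk, hx, rfl⟩
  | succ m hm ih =>
    obtain ⟨l, h1, h2, h3⟩ := ih
    obtain ⟨l', h1', h2', h3'⟩ := lev_up1 m l x h1 h2
    exact ⟨l', h1', h2', h3'.trans h3⟩

lemma T0_eq (n k : ℕ) (x : ℝ) (hk : k + 1 < chaconH n) (hx : x ∈ chaconLevel n k) :
    chaconT0 x = x - chaconL n k + chaconL n (k + 1) := by
  have h : ∃ p : ℕ × ℕ, p.2 + 1 < chaconH p.1 ∧ x ∈ chaconLevel p.1 p.2 := ⟨(n, k), hk, hx⟩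
  rw [chaconT0, dif_pos h]
  obtain ⟨h1, h2⟩ := h.choose_spec
  set q := h.choose
  obtain ⟨l, a1, a2, a3⟩ := lev_up n (max n q.1) k x (le_max_left _ _) hk hx
  obtain ⟨l', b1, b2, b3⟩ := lev_up q.1 (max n q.1) q.2 x (le_max_right _ _) h1 h2
  have : l = l' := lev_uniq _ l l' x (by omega) (by omega) a2 b2
  subst this
  linarith

lemma T_eq (n k : ℕ) (x : ChaconX) (hk : k + 1 < chaconH n) (hx : (x : ℝ) ∈ chaconLevel n k) :
    (chaconT x : ℝ) = x - chaconL n k + chaconL n (k + 1) := by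
  have : (chaconT x : ℝ) = max 0 (chaconT0 (x : ℝ)) := rfl
  rw [this, T0_eq n k x hk hx, max_eq_right]
  have h1 : chaconL n k ≤ x := hx.1
  have h2 : 0 ≤ chaconL n (k + 1) := by rw [chaconL_eq]; positivity
  linarith

lemma T_mem (n k : ℕ) (x : ChaconX) (hk : k + 1 < chaconH n) (hx : (x : ℝ) ∈ chaconLevel n k) :
    (chaconT x : ℝ) ∈ chaconLevel n (k + 1) := by
  rw [chaconLevel, T_eq n k x hk hx]
  have h1 := hx.1
  have h2 := hx.2
  constructor <;> linarith

lemma chH_ge (n : ℕ) : 6 ^ n ≤ chaconH n := by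
  induction n with
  | zero => simp [chaconH]
  | succ n ih => rw [chH_succ, pow_succ]; omega

lemma chH_big (n : ℕ) : (n : ℝ) < chaconH n * (3 : ℝ)⁻¹ ^ n := by
  have h1 : (6 : ℝ) ^ n ≤ chaconH n := by exact_mod_cast chH_ge n
  have h2 : (n : ℝ) < 2 ^ n := by exact_mod_cast Nat.lt_two_pow_self
  have h3 : (6 : ℝ) ^ n * (3 : ℝ)⁻¹ ^ n = 2 ^ n := by rw [← mul_pow]; norm_num
  have := mul_le_mul_of_nonneg_right h1 (show (0 : ℝ) ≤ (3 : ℝ)⁻¹ ^ n by positivity)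
  linarith

lemma exists_lev (x : ChaconX) : ∃ n k, k + 1 < chaconH n ∧ (x : ℝ) ∈ chaconLevel n k := by
  obtain ⟨n, hn⟩ := exists_nat_gt (x : ℝ)
  have hx0 : (0 : ℝ) ≤ x := x.2
  have hx := hn.trans (chH_big n)
  have e : (3 : ℝ)⁻¹ ^ n * 3 ^ n = 1 := by rw [← mul_pow]; norm_num
  have hp : (0 : ℝ) < 3 ^ n := by positivity
  have hq : (0 : ℝ) < (3 : ℝ)⁻¹ ^ n := by positivity
  have hxx : (x : ℝ) = (x * 3 ^ n) * (3 : ℝ)⁻¹ ^ n := by rw [mul_assoc, mul_comm (3 ^ n : ℝ), e, mul_one]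
  have f1 := Nat.floor_le (show (0 : ℝ) ≤ x * 3 ^ n by positivity)
  have f2 := Nat.lt_floor_add_one ((x : ℝ) * 3 ^ n)
  have hj : ⌊(x : ℝ) * 3 ^ n⌋₊ < chaconH n := by
    rw [Nat.floor_lt (by positivity)]
    rw [hxx] at hx
    exact lt_of_mul_lt_mul_right hx hq.le
  obtain ⟨k, hk, hkj⟩ := chP_surj n _ hj
  have hm : (x : ℝ) ∈ chaconLevel n k := by
    rw [mem_lev, hkj]
    constructor
    · conv_rhs => rw [hxx]
      exact mul_le_mul_of_nonneg_right f1 hq.le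
    · conv_lhs => rw [hxx]
      exact mul_lt_mul_of_pos_right f2 hq
  have hs := chH_succ n
  rcases (lev_split n k x hk).1 hm with h | h | h
  · exact ⟨n + 1, _, by omega, h⟩
  · exact ⟨n + 1, _, by omega, h⟩
  · exact ⟨n + 1, _, by omega, h⟩

lemma T_inj : Function.Injective chaconT := by
  intro x y hxy
  obtain ⟨n, k, hk, hx⟩ := exists_lev x
  obtain ⟨n', k', hk', hy⟩ := exists_lev y
  obtain ⟨l, a1, a2, -⟩ := lev_up n (max n n') k x (le_max_left _ _) hk hx
  obtain ⟨l', b1, b2, -⟩ := lev_up n' (max n n') k' y (le_max_right _ _) hk' hy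
  have c1 := T_mem _ _ x a1 a2
  have c2 := T_mem _ _ y b1 b2
  rw [hxy] at c1
  have := lev_uniq _ _ _ _ a1 b1 c1 c2
  have : l = l' := by omega
  subst this
  have d1 := T_eq _ _ x a1 a2
  have d2 := T_eq _ _ y b1 b2
  rw [hxy] at d1
  apply Subtype.ext
  linarith

/-- Levels as subsets of `X`. -/
def levX (n k : ℕ) : Set ChaconX := Subtype.val ⁻¹' chaconLevel n k

lemma levX_meas (n k : ℕ) : MeasurableSet (levX n k) :=
  measurable_subtype_coe measurableSet_Ico

lemma T_preimage (n k : ℕ) (hk : k + 1 < chaconH n) :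
    chaconT ⁻¹' (levX n (k + 1)) = levX n k := by
  ext x
  constructor
  · intro hx
    have hx' : (chaconT x : ℝ) ∈ chaconLevel n (k + 1) := hx
    have h1 := hx'.1
    have h2 := hx'.2
    have h0 : 0 ≤ chaconL n k := by rw [chaconL_eq]; positivity
    let y : ChaconX := ⟨chaconT x - chaconL n (k + 1) + chaconL n k, by
      show (0 : ℝ) ≤ _; linarith⟩
    have hy : (y : ℝ) ∈ chaconLevel n k := by
      constructor <;> simp only [y] <;> linarith
    have : chaconT y = chaconT x := by
      apply Subtype.ext
      rw [T_eq n k y hk hy]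
      simp only [y]; ring
    rw [← T_inj this]
    exact hy
  · exact fun hx => T_mem n k x hk hx

section
variable (σ : Measure ChaconX) (hinv : σ.map chaconT = σ) (hT : AEMeasurable chaconT σ)

lemma sig_lev (hinv : σ.map chaconT = σ) (hT : AEMeasurable chaconT σ)
    (n k : ℕ) (hk : k < chaconH n) : σ (levX n k) = σ (levX n 0) := by
  induction k with
  | zero => rfl
  | succ k ih =>
    rw [← ih (by omega), ← T_preimage n k hk, ← Measure.map_apply_of_aemeasurable hT (levX_meas _ _),
      hinv]

lemma sig_split (hinv : σ.map chaconT = σ) (hT : AEMeasurable chaconT σ) (n : ℕ) :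
    σ (levX n 0) = 3 * σ (levX (n + 1) 0) := by
  have hs := chH_succ n
  have hp := chH_pos n
  have e : levX n 0 = levX (n + 1) 0 ∪ (levX (n + 1) (0 + chaconH n) ∪
      levX (n + 1) (0 + (2 * chaconH n + 1))) := by
    ext x; exact lev_split n 0 x hp
  have dis : ∀ a b, a < chaconH (n + 1) → b < chaconH (n + 1) → a ≠ b →
      Disjoint (levX (n + 1) a) (levX (n + 1) b) := by
    intro a b ha hb hab
    rw [Set.disjoint_left]
    intro x h1 h2
    exact hab (lev_uniq _ _ _ _ ha hb h1 h2)
  rw [e, measure_union _ ((levX_meas _ _).union (levX_meas _ _)),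
    measure_union _ (levX_meas _ _), sig_lev σ hinv hT (n + 1) (0 + chaconH n) (by omega),
    sig_lev σ hinv hT (n + 1) (0 + (2 * chaconH n + 1)) (by omega)]
  · ring
  · exact dis _ _ (by omega) (by omega) (by omega)
  · rw [Set.disjoint_union_right]
    exact ⟨dis _ _ (by omega) (by omega) (by omega), dis _ _ (by omega) (by omega) (by omega)⟩

end

lemma ico_fin (σ : Measure ChaconX) (hbf : BoundedlyFinite σ) (a b : ℝ) :
    σ (Subtype.val ⁻¹' Ico a b) ≠ ⊤ := by
  apply (hbf _ (measurable_subtype_coe measurableSet_Ico) _).ne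
  obtain ⟨r, hr⟩ := (Metric.isBounded_Ico a b).subset_closedBall (0 : ℝ)
  refine (Metric.isBounded_closedBall (x := (⟨0, le_refl (0 : ℝ)⟩ : ChaconX)) (r := r)).subset ?_
  intro x hx
  exact hr hx

/-- The measure of a level. -/
lemma sig_real (σ : Measure ChaconX)
    (hinv : σ.map chaconT = σ) (hT : AEMeasurable chaconT σ) (n : ℕ) :
    (σ (levX n 0)).toReal = (σ (levX 0 0)).toReal * (3 : ℝ)⁻¹ ^ n := by
  induction n with
  | zero => simp
  | succ n ih =>
    have h := congrArg ENNReal.toReal (sig_split σ hinv hT n)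
    rw [ENNReal.toReal_mul, ih] at h
    simp only [ENNReal.toReal_ofNat] at h
    rw [pow_succ]; linarith

lemma sig_ico (σ : Measure ChaconX) (hbf : BoundedlyFinite σ)
    (hinv : σ.map chaconT = σ) (hT : AEMeasurable chaconT σ) (n j : ℕ) (hj : j ≤ chaconH n) :
    (σ (Subtype.val ⁻¹' Ico 0 ((j : ℝ) * (3 : ℝ)⁻¹ ^ n))).toReal
      = (σ (levX 0 0)).toReal * ((j : ℝ) * (3 : ℝ)⁻¹ ^ n) := by
  induction j with
  | zero => simp
  | succ j ih =>
    obtain ⟨k, hk, hkj⟩ := chP_surj n j hj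
    have hq : (0 : ℝ) < (3 : ℝ)⁻¹ ^ n := by positivity
    have e : (Subtype.val ⁻¹' Ico 0 (((j + 1 : ℕ) : ℝ) * (3 : ℝ)⁻¹ ^ n) : Set ChaconX)
        = Subtype.val ⁻¹' Ico 0 ((j : ℝ) * (3 : ℝ)⁻¹ ^ n) ∪ levX n k := by
      rw [levX, ← preimage_union, chaconLevel, chaconL_eq, hkj, Ico_union_Ico_eq_Ico]
      · push_cast; congr 2; ring
      · positivity
      · linarith
    rw [e, measure_union _ (levX_meas _ _), ENNReal.toReal_add (ico_fin σ hbf _ _)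
      (show σ (levX n k) ≠ ⊤ from ico_fin σ hbf _ _), ih (by omega), sig_lev σ hinv hT n k hk, sig_real σ hinv hT n]
    · push_cast; ring
    · rw [levX, chaconLevel, chaconL_eq, hkj]
      apply Disjoint.preimage
      rw [Set.disjoint_left]
      intro x h1 h2
      exact absurd h1.2 (not_lt.2 h2.1)

lemma sig_b (σ : Measure ChaconX) (hbf : BoundedlyFinite σ)
    (hinv : σ.map chaconT = σ) (hT : AEMeasurable chaconT σ) (b : ℝ) (hb : 0 ≤ b) :
    (σ (Subtype.val ⁻¹' Ico 0 b)).toReal = (σ (levX 0 0)).toReal * b := by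
  set c := (σ (levX 0 0)).toReal with hc
  have hc0 : 0 ≤ c := ENNReal.toReal_nonneg
  have mono : ∀ u v : ℝ, u ≤ v → (σ (Subtype.val ⁻¹' Ico 0 u)).toReal ≤
      (σ (Subtype.val ⁻¹' Ico 0 v)).toReal := fun u v huv =>
    ENNReal.toReal_mono (ico_fin σ hbf _ _)
      (measure_mono (preimage_mono (Ico_subset_Ico_right huv)))
  have key : ∀ᶠ n : ℕ in Filter.atTop,
      |(σ (Subtype.val ⁻¹' Ico 0 b)).toReal - c * b| ≤ c * (3 : ℝ)⁻¹ ^ n := by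
    obtain ⟨N, hN⟩ := exists_nat_gt b
    filter_upwards [Filter.eventually_ge_atTop N] with n hn
    have hx : b < chaconH n * (3 : ℝ)⁻¹ ^ n :=
      hN.trans (lt_of_le_of_lt (by exact_mod_cast hn) (chH_big n))
    have e : (3 : ℝ) ^ n * (3 : ℝ)⁻¹ ^ n = 1 := by rw [← mul_pow]; norm_num
    have hq : (0 : ℝ) < (3 : ℝ)⁻¹ ^ n := by positivity
    have hxx : b = (b * 3 ^ n) * (3 : ℝ)⁻¹ ^ n := by rw [mul_assoc, e, mul_one]
    have f1 := Nat.floor_le (show (0 : ℝ) ≤ b * 3 ^ n by positivity)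
    have f2 := Nat.lt_floor_add_one (b * 3 ^ n)
    have hj : ⌊b * 3 ^ n⌋₊ < chaconH n := by
      rw [Nat.floor_lt (by positivity)]
      rw [hxx] at hx
      exact lt_of_mul_lt_mul_right hx hq.le
    set j := ⌊b * 3 ^ n⌋₊
    have g1 : (j : ℝ) * (3 : ℝ)⁻¹ ^ n ≤ b := by
      rw [hxx]; exact mul_le_mul_of_nonneg_right f1 hq.le
    have g2 : b ≤ ((j + 1 : ℕ) : ℝ) * (3 : ℝ)⁻¹ ^ n := by
      rw [hxx]; push_cast; exact mul_le_mul_of_nonneg_right f2.le hq.le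
    have m1 := mono _ _ g1
    have m2 := mono _ _ g2
    rw [sig_ico σ hbf hinv hT n j hj.le] at m1
    rw [sig_ico σ hbf hinv hT n (j + 1) hj] at m2
    have g1' := mul_le_mul_of_nonneg_left g1 hc0
    have g2' := mul_le_mul_of_nonneg_left g2 hc0
    push_cast at m2 g2'
    rw [abs_le]
    constructor <;> nlinarith
  have lim : Filter.Tendsto (fun n : ℕ => c * (3 : ℝ)⁻¹ ^ n) Filter.atTop (nhds 0) := by
    have := (tendsto_pow_atTop_nhds_zero_of_lt_one (r := (3 : ℝ)⁻¹) (by norm_num)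
      (by norm_num)).const_mul c
    simpa using this
  have := ge_of_tendsto lim key
  have h0 := abs_nonpos_iff.1 this
  linarith

/-- **Proposition.**  The Lebesgue measure `μ` is, up to a multiplicative constant, the
only `T`-invariant boundedly finite measure on `X = ℝ₊`. -/
theorem chacon_unique_invariant_measure (σ : Measure ChaconX)
    (hbf : BoundedlyFinite σ) (hinv : σ.map chaconT = σ) :
    ∃ c : ℝ≥0, σ = c • chaconMu := by
  by_cases hT : AEMeasurable chaconT σ
  swap
  · refine ⟨0, ?_⟩
    rw [zero_smul, ← hinv, Measure.map_of_not_aemeasurable hT]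
  set c : ℝ≥0 := (σ (levX 0 0)).toNNReal with hc
  refine ⟨c, ?_⟩
  have hemb : MeasurableEmbedding (Subtype.val : ChaconX → ℝ) :=
    MeasurableEmbedding.subtype_coe measurableSet_Ici
  have hmu : chaconMu.map Subtype.val = volume.restrict (Ici (0 : ℝ)) :=
    map_comap_subtype_coe measurableSet_Ici _
  have main : σ.map Subtype.val = (c • chaconMu).map Subtype.val := by
    rw [Measure.map_smul, hmu]
    symm
    apply Measure.ext_of_Ico
    intro a b hab
    have pre : (Subtype.val ⁻¹' Ico a b : Set ChaconX) = Subtype.val ⁻¹' Ico (max a 0) b := by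
      ext x
      have : (0 : ℝ) ≤ x := x.2
      simp [this]
    rw [Measure.smul_apply, Measure.restrict_apply measurableSet_Ico,
      Measure.map_apply measurable_subtype_coe measurableSet_Ico, pre]
    have e2 : Ico a b ∩ Ici 0 = Ico (max a 0) b := by
      ext x; simp only [mem_inter_iff, mem_Ico, mem_Ici, max_le_iff]; tauto
    rw [e2, Real.volume_Ico]
    have ha0 : 0 ≤ max a 0 := le_max_right _ _
    generalize max a 0 = a' at ha0
    rcases le_or_gt b a' with h | h
    · rw [Ico_eq_empty (not_lt.2 h)]
      simp [h]
    · have hb := sig_b σ hbf hinv hT b (ha0.trans h.le)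
      have ha := sig_b σ hbf hinv hT a' ha0
      have e3 : (Subtype.val ⁻¹' Ico 0 b : Set ChaconX)
          = Subtype.val ⁻¹' Ico 0 a' ∪ Subtype.val ⁻¹' Ico a' b := by
        rw [← preimage_union, Ico_union_Ico_eq_Ico ha0 h.le]
      rw [e3, measure_union _ (measurable_subtype_coe measurableSet_Ico),
        ENNReal.toReal_add (ico_fin σ hbf _ _) (ico_fin σ hbf _ _), ha] at hb
      · rw [← ENNReal.toReal_eq_toReal_iff' _ (ico_fin σ hbf _ _)]
        · rw [ENNReal.smul_def, smul_eq_mul, ENNReal.toReal_mul,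
            ENNReal.toReal_ofReal (by linarith)]
          have : ((c : ℝ≥0∞)).toReal = (σ (levX 0 0)).toReal := rfl
          rw [this]; linarith
        · exact ENNReal.mul_ne_top ENNReal.coe_ne_top ENNReal.ofReal_ne_top
      · apply Disjoint.preimage
        rw [Set.disjoint_left]
        intro x h1 h2
        exact absurd h1.2 (not_lt.2 h2.1)
  have := congrArg (Measure.comap (Subtype.val : ChaconX → ℝ)) main
  rwa [hemb.comap_map, hemb.comap_map] at this
end
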